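/- arXiv:0909.4258 — 2 statements merged into one kernel-verified Lean document; each statement's English description precedes it below -/
import Mathlib

section
/- Consider ẋ = f(x) + εg(t,x,ε) with f ∈ C²(ℝⁿ,ℝⁿ), g ∈ C¹(ℝ×ℝⁿ×[0,1],ℝⁿ) T-periodic in t, with unique solutions of Cauchy problems defined on [0,T]. Let x₀ be a T-periodic limit cycle of ẋ = f(x), z₀ a T-periodic solution of ż = −(f'(x₀(t)))*z normalized so that ⟨ẋ₀(t),z₀(t)⟩ ≡ 1, M(θ) = ∫₀ᵀ ⟨g(t,x₀(t+θ),0), z₀(t+θ)⟩ dt the Malkin bifurcation function, and 𝒫_ε(v) = x(T,v,ε) the Poincaré map. Assume there exists θ₀ ∈ [0,T] such that (𝒫₀)'(x₀(θ₀)) has n−1 eigenvalues with negative real part... [correction: n−1 eigenvalues of modulus different from 1 lying so that the nontrivial Floquet multipliers have real parts of the stated sign], i.e. assume (𝒫₀)'(x₀(θ₀)) − I has n−1 eigenvalues with negative real parts, M(θ₀) = 0 and M'(θ₀) < 0. Then there is ε₀ > 0 such that for every ε ∈ (0,ε₀] the perturbed system has a unique T-periodic solution x_ε with x_ε(t) →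 x₀(t+θ₀) as ε → 0 uniformly on [0,T]. -/
open Set Filter Topology
open scoped InnerProductSpace

/-!
Everything happens near zeros of the displacement `F(ε, v) = 𝒫_ε(v) - v`, which vanishes on the
cycle at `ε = 0`, so that its differential is degenerate there and the implicit function theorem
does not apply to `F` itself. In the coordinates `v = x₀(θ) + ε η` the equation becomes
`ε G(ε, θ, η) = 0`, where `G` is the displacement of the equation satisfied by
`y = (x - x₀(· + θ)) / ε`. That equation still makes sense at `ε = 0`, where it is the linearization
along the cycle with forcing `g`; pairing it with the adjoint solution gives
`⟪G(0, θ, η), z₀(θ)⟫ = M(θ)`.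

Fix the phase by `⟪z₀(θ₀), η⟫ = 0`. A simple zero of `M` then gives, by the Fredholm alternative, a
unique zero of `G(0, ·)` with `θ` near `θ₀`, and the differential there is an isomorphism because
the multiplier `1` of the cycle is simple and `M'(θ₀) ≠ 0`. The implicit function theorem continues
the zero to small `ε`. Conversely, every zero of `F(ε, ·)` near `x₀(θ₀)` is at distance `O(ε)` from
the cycle, so compactness in `(θ, η)` turns uniqueness for `G` into uniqueness in a ball whose
radius does not depend on `ε`.
-/

namespace Malkin

noncomputable section

section Nemytskii

/-- The Nemytskii (superposition) operator `y ↦ (s ↦ N (s, y s))`. -/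
def nemytskii {K V W : Type*} [TopologicalSpace K] [TopologicalSpace V] [TopologicalSpace W]
    (N : C(K × V, W)) (y : C(K, V)) : C(K, W) :=
  N.comp ((ContinuousMap.id K).prodMk y)

@[simp]
lemma nemytskii_apply {K V W : Type*} [TopologicalSpace K] [TopologicalSpace V]
    [TopologicalSpace W] (N : C(K × V, W)) (y : C(K, V)) (s : K) :
    nemytskii N y s = N (s, y s) := rfl

variable {K V W : Type*} [TopologicalSpace K] [CompactSpace K] [NormedAddCommGroup V]
  [NormedAddCommGroup W]

lemma eventually_forall_norm_sub_lt (N : C(K × V, W)) (y : C(K, V)) {c : ℝ} (hc : 0 < c) :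
    ∀ᶠ h : V in 𝓝 0, ∀ s, ‖N (s, y s + h) - N (s, y s)‖ < c := by
  have hcont : Continuous fun p : V × K => ‖N (p.2, y p.2 + p.1) - N (p.2, y p.2)‖ := by
    fun_prop
  have hpoint : ∀ s ∈ (univ : Set K), ∀ᶠ p : V × K in 𝓝 (0, s),
      ‖N (p.2, y p.2 + p.1) - N (p.2, y p.2)‖ < c := fun s _ =>
    (hcont.tendsto (0, s)).eventually_lt_const (by simpa using hc)
  simpa using isCompact_univ.eventually_forall_of_forall_eventually hpoint

variable [NormedSpace ℝ V] [NormedSpace ℝ W]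

/-- The multiplication operator `y ↦ (s ↦ A s (y s))` on spaces of continuous functions. -/
def mulOperator (A : C(K, V →L[ℝ] W)) : C(K, V) →L[ℝ] C(K, W) :=
  LinearMap.mkContinuous
    { toFun := fun y => ⟨fun s => A s (y s), by fun_prop⟩
      map_add' := fun x y => by ext s; simp
      map_smul' := fun c y => by ext s; simp } ‖A‖ fun y =>
    (ContinuousMap.norm_le _ (by positivity)).2 fun s =>
      (A s).le_of_opNorm_le_of_le (A.norm_coe_le_norm s) (y.norm_coe_le_norm s)

@[simp]
lemma mulOperator_apply (A : C(K, V →L[ℝ] W)) (y : C(K, V)) (s : K) :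
    mulOperator A y s = A s (y s) := rfl

theorem hasStrictFDerivAt_nemytskii {N : C(K × V, W)} {N' : C(K × V, V →L[ℝ] W)}
    (hN : ∀ s v, HasFDerivAt (fun v => N (s, v)) (N' (s, v)) v) (y : C(K, V)) :
    HasStrictFDerivAt (nemytskii N) (mulOperator (nemytskii N' y)) y := by
  rw [hasStrictFDerivAt_iff_isLittleO, Asymptotics.isLittleO_iff]
  intro c hc
  obtain ⟨r, hr, hball⟩ := Metric.eventually_nhds_iff.1 (eventually_forall_norm_sub_lt N' y hc)
  filter_upwards [prod_mem_nhds (Metric.ball_mem_nhds y hr) (Metric.ball_mem_nhds y hr)]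
    with p ⟨hp₁, hp₂⟩
  refine (ContinuousMap.norm_le _ (by positivity)).2 fun s => ?_
  have mem_ball (q : C(K, V)) (hq : q ∈ Metric.ball y r) : q s ∈ Metric.ball (y s) r :=
    (ContinuousMap.dist_apply_le_dist s).trans_lt hq
  have hmean := (convex_ball (y s) r).norm_image_sub_le_of_norm_hasFDerivWithin_le'
    (f := fun v => N (s, v)) (φ := N' (s, y s)) (C := c)
    (fun v _ => (hN s v).hasFDerivWithinAt) (fun v hv => by
      have h := hball (y := v - y s) (by simpa [dist_eq_norm] using hv) s
      simpa using h.le) (mem_ball _ hp₂) (mem_ball _ hp₁)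
  calc _ = ‖N (s, p.1 s) - N (s, p.2 s) - N' (s, y s) (p.1 s - p.2 s)‖ := by simp
    _ ≤ c * ‖p.1 s - p.2 s‖ := hmean
    _ ≤ c * ‖p.1 - p.2‖ := by gcongr; exact (p.1 - p.2).norm_coe_le_norm s

end Nemytskii

section Integral

lemma iccExtend_of_mem {E : Type*} [TopologicalSpace E] {T : ℝ} (hT : 0 ≤ T)
    (u : C(Icc 0 T, E)) {t : ℝ} (ht : t ∈ Icc 0 T) :
    u.IccExtend hT t = u ⟨t, ht⟩ :=
  Set.IccExtend_of_mem hT u ht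

variable {E : Type*} [NormedAddCommGroup E] [NormedSpace ℝ E] {T : ℝ}

lemma norm_integral_iccExtend_le (hT : 0 ≤ T) (y : C(Icc 0 T, E)) (t : Icc 0 T) :
    ‖∫ s in 0..t, y.IccExtend hT s‖ ≤ T * ‖y‖ := by
  calc _ ≤ ‖y‖ * |(t : ℝ) - 0| :=
        intervalIntegral.norm_integral_le_of_norm_le_const fun _ _ => y.norm_coe_le_norm _
    _ = t * ‖y‖ := by rw [sub_zero, abs_of_nonneg t.2.1, mul_comm]
    _ ≤ T * ‖y‖ := by gcongr; exact t.2.2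

/-- The integration operator `y ↦ (t ↦ ∫₀ᵗ y)` on `C([0, T], E)`. -/
def primitive (hT : 0 ≤ T) : C(Icc 0 T, E) →L[ℝ] C(Icc 0 T, E) :=
  LinearMap.mkContinuous
    { toFun := fun y => ⟨fun t => ∫ s in 0..t, y.IccExtend hT s,
        (intervalIntegral.continuous_primitive
          (fun a b => (y.IccExtend hT).continuous.intervalIntegrable a b) 0).comp
          continuous_subtype_val⟩
      map_add' := fun x y => by
        ext t
        exact intervalIntegral.integral_add
          ((x.IccExtend hT).continuous.intervalIntegrable _ _)
          ((y.IccExtend hT).continuous.intervalIntegrable _ _)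
      map_smul' := fun c y => by
        ext t
        exact intervalIntegral.integral_smul c (y.IccExtend hT) } T fun y =>
    (ContinuousMap.norm_le _ (by positivity)).2 (norm_integral_iccExtend_le hT y)

lemma norm_primitive_mulOperator_pow_apply_le (hT : 0 ≤ T) (A : C(Icc 0 T, E →L[ℝ] E))
    (y : C(Icc 0 T, E)) (k : ℕ) (t : Icc 0 T) :
    ‖((primitive hT ∘L mulOperator A) ^ k) y t‖ ≤ (‖A‖ * t) ^ k / k.factorial * ‖y‖ := by
  induction k generalizing t with
  | zero => simpa using y.norm_coe_le_norm t
  | succ k ih =>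
    set w := ((primitive hT ∘L mulOperator A) ^ k) y
    have integrand_le (s : ℝ) (hs : s ∈ Ioc (0 : ℝ) t) :
        ‖(mulOperator A w).IccExtend hT s‖ ≤ ‖A‖ ^ (k + 1) / k.factorial * ‖y‖ * s ^ k := by
      have hsT : s ∈ Icc 0 T := ⟨hs.1.le, hs.2.trans t.2.2⟩
      rw [iccExtend_of_mem hT _ hsT, mulOperator_apply]
      refine ((A _).le_of_opNorm_le_of_le (A.norm_coe_le_norm _) (ih ⟨s, hsT⟩)).trans_eq ?_
      rw [mul_pow]
      ring
    calc ‖((primitive hT ∘L mulOperator A) ^ (k + 1)) y t‖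
        = ‖∫ s in 0..t, (mulOperator A w).IccExtend hT s‖ := by rw [pow_succ']; rfl
      _ ≤ ∫ s in 0..t, ‖A‖ ^ (k + 1) / k.factorial * ‖y‖ * s ^ k :=
        intervalIntegral.norm_integral_le_of_norm_le t.2.1 (.of_forall integrand_le)
          (Continuous.intervalIntegrable (by fun_prop) _ _)
      _ = (‖A‖ * t) ^ (k + 1) / (k + 1).factorial * ‖y‖ := by
        rw [intervalIntegral.integral_const_mul, integral_pow, Nat.factorial_succ]
        push_cast
        rw [zero_pow k.succ_ne_zero, mul_pow]
        field_simp
        ring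

/-- Volterra operators are quasinilpotent: the `k`-th iterate has norm at most `(‖A‖ T)ᵏ / k!`. -/
theorem isUnit_one_sub_primitive_mulOperator [CompleteSpace E] (hT : 0 ≤ T)
    (A : C(Icc 0 T, E →L[ℝ] E)) :
    IsUnit (1 - primitive hT ∘L mulOperator A) := by
  set V : C(Icc 0 T, E) →L[ℝ] C(Icc 0 T, E) := primitive hT ∘L mulOperator A
  obtain ⟨k, hk⟩ : ∃ k : ℕ, (‖A‖ * T) ^ k / k.factorial < 1 :=
    ((FloorSemiring.tendsto_pow_div_factorial_atTop (‖A‖ * T)).eventually_lt_const one_pos).exists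
  have norm_pow_lt : ‖V ^ k‖ < 1 := by
    refine (ContinuousLinearMap.opNorm_le_bound _ (by positivity) fun y => ?_).trans_lt hk
    refine (ContinuousMap.norm_le _ (by positivity)).2 fun t =>
      (norm_primitive_mulOperator_pow_apply_le hT A y k t).trans ?_
    have := t.2.1
    have := t.2.2
    gcongr
  have isUnit_prod : IsUnit ((1 - V) * ∑ i ∈ Finset.range k, V ^ i) := by
    rw [mul_neg_geom_sum]
    exact isUnit_one_sub_of_norm_lt_one (R := C(Icc 0 T, E) →L[ℝ] C(Icc 0 T, E)) norm_pow_lt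
  have commute : Commute (1 - V) (∑ i ∈ Finset.range k, V ^ i) :=
    Commute.sum_right _ _ _ fun i _ => (Commute.one_left _).sub_left (Commute.pow_right rfl i)
  exact (commute.isUnit_mul_iff.1 isUnit_prod).1

end Integral

section AveragedDerivative

variable {V W : Type*} [NormedAddCommGroup V] [NormedSpace ℝ V] [NormedAddCommGroup W]
  [NormedSpace ℝ W]

lemma hasFDerivAt_comp_prodMk_left {k : ℝ × V → W} (hk : ContDiff ℝ 1 k) (s : ℝ) (v : V) :
    HasFDerivAt (fun v => k (s, v)) ((fderiv ℝ k (s, v)).comp (.inr ℝ ℝ V)) v :=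
  (hk.differentiable one_ne_zero (s, v)).hasFDerivAt.comp v (hasFDerivAt_prodMk_right s v)

lemma continuous_fderiv_comp_inr {k : ℝ × V → W} (hk : ContDiff ℝ 1 k) :
    Continuous fun p => (fderiv ℝ k p).comp (.inr ℝ ℝ V) :=
  (hk.continuous_fderiv one_ne_zero).clm_comp continuous_const

lemma hasFDerivAt_intervalIntegral_of_contDiff {T : ℝ} (hT : 0 ≤ T)
    {k : ℝ × V → W} (hk : ContDiff ℝ 1 k) (v : V) :
    HasFDerivAt (fun v => ∫ s in 0..T, k (s, v))
      (∫ s in 0..T, (fderiv ℝ k (s, v)).comp (.inr ℝ ℝ V)) v := by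
  let N : C(Icc 0 T × V, W) := ⟨fun q => k (q.1, q.2), hk.continuous.comp (by fun_prop)⟩
  let N' : C(Icc 0 T × V, V →L[ℝ] W) :=
    ⟨fun q => (fderiv ℝ k (q.1, q.2)).comp (.inr ℝ ℝ V),
      (continuous_fderiv_comp_inr hk).comp (by fun_prop)⟩
  let I : C(Icc 0 T, W) →L[ℝ] W :=
    ContinuousMap.evalCLM ℝ ⟨T, hT, le_rfl⟩ ∘L primitive hT
  have hI {h : ℝ → W} {u : C(Icc 0 T, W)} (hu : ∀ s, u s = h s) : I u = ∫ s in 0..T, h s :=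
    intervalIntegral.integral_congr fun s hs => by
      rw [uIcc_of_le hT] at hs
      exact (iccExtend_of_mem hT u hs).trans (hu ⟨s, hs⟩)
  let const : V →L[ℝ] C(Icc 0 T, V) := .const ℝ (Icc 0 T)
  have hderiv := I.hasFDerivAt.comp v
    ((hasStrictFDerivAt_nemytskii (N := N) (N' := N')
      (fun s v => hasFDerivAt_comp_prodMk_left hk s v) (const v)).hasFDerivAt.comp v
        const.hasFDerivAt)
  refine (hderiv.congr_of_eventuallyEq (.of_forall fun v => (hI fun s => rfl).symm)).congr_fderiv ?_
  ext w
  have hint : IntervalIntegrable (fun s => (fderiv ℝ k (s, v)).comp (.inr ℝ ℝ V))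
      MeasureTheory.volume 0 T :=
    ((continuous_fderiv_comp_inr hk).comp (by fun_prop : Continuous fun s : ℝ => (s, v))
      ).intervalIntegrable _ _
  rw [ContinuousLinearMap.intervalIntegral_apply hint]
  exact hI fun s => rfl

lemma contDiff_intervalIntegral_of_contDiff {T : ℝ} (hT : 0 ≤ T)
    {k : ℝ × V → W} (hk : ContDiff ℝ 1 k) : ContDiff ℝ 1 fun v => ∫ s in 0..T, k (s, v) := by
  refine contDiff_one_iff_hasFDerivAt.2
    ⟨_, ?_, hasFDerivAt_intervalIntegral_of_contDiff hT hk⟩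
  exact intervalIntegral.continuous_parametric_intervalIntegral_of_continuous'
    (f := fun v s => (fderiv ℝ k (s, v)).comp (.inr ℝ ℝ V))
    ((continuous_fderiv_comp_inr hk).comp continuous_swap) 0 T

/-- The derivative of `f` averaged over the segment from `a` to `a + w`; it turns increments of `f`
into a linear expression and depends on `(a, w)` with one derivative less than `f`. -/
def averagedFDeriv (f : V → W) (a w : V) : V →L[ℝ] W := ∫ s in 0..1, fderiv ℝ f (a + s • w)

lemma averagedFDeriv_zero [CompleteSpace W] (f : V → W) (a : V) :
    averagedFDeriv f a 0 = fderiv ℝ f a := by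
  simp [averagedFDeriv]

lemma continuous_averagedFDeriv {f : V → W} (hf : ContDiff ℝ 1 f) :
    Continuous fun p : V × V => averagedFDeriv f p.1 p.2 :=
  intervalIntegral.continuous_parametric_intervalIntegral_of_continuous'
    (f := fun (p : V × V) (s : ℝ) => fderiv ℝ f (p.1 + s • p.2))
    ((hf.continuous_fderiv one_ne_zero).comp
      (by fun_prop : Continuous fun q : (V × V) × ℝ => q.1.1 + q.2 • q.1.2)) 0 1

lemma contDiff_averagedFDeriv {f : V → W} (hf : ContDiff ℝ 2 f) :
    ContDiff ℝ 1 fun p : V × V => averagedFDeriv f p.1 p.2 :=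
  contDiff_intervalIntegral_of_contDiff zero_le_one
    (k := fun q : ℝ × V × V => fderiv ℝ f (q.2.1 + q.1 • q.2.2))
    ((hf.fderiv_right (by norm_num)).comp (by fun_prop))

lemma averagedFDeriv_apply_self [CompleteSpace W] {f : V → W} (hf : ContDiff ℝ 1 f) (a w : V) :
    averagedFDeriv f a w w = f (a + w) - f a := by
  have hcont : Continuous fun s : ℝ => fderiv ℝ f (a + s • w) :=
    (hf.continuous_fderiv one_ne_zero).comp (by fun_prop)
  have hderiv (s : ℝ) :
      HasDerivAt (fun s : ℝ => f (a + s • w)) (fderiv ℝ f (a + s • w) w) s := by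
    have hline : HasDerivAt (fun s : ℝ => a + s • w) w s := by
      simpa using ((hasDerivAt_id s).smul_const w).const_add a
    exact (hf.differentiable one_ne_zero _).hasFDerivAt.comp_hasDerivAt s hline
  rw [averagedFDeriv, ContinuousLinearMap.intervalIntegral_apply (hcont.intervalIntegrable _ _),
    intervalIntegral.integral_eq_sub_of_hasDerivAt (fun s _ => hderiv s)
      ((hcont.clm_apply continuous_const).intervalIntegrable _ _)]
  simp

end AveragedDerivative

section IntegralSolution

variable {E : Type*} [NormedAddCommGroup E] [NormedSpace ℝ E] {T : ℝ}

/-- `u` solves `ẋ = w(t, x)`, `x(0) = c` on `[0, T]`, in integrated form. -/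
def IsIntegralSolution (hT : 0 ≤ T) (w : ℝ → E → E) (c : E) (u : C(Icc 0 T, E)) : Prop :=
  ∀ t : Icc 0 T, u t = c + ∫ s in 0..t, w s (u.IccExtend hT s)

lemma isIntegralSolution_iff_eq_const_add_primitive {hT : 0 ≤ T} {w : ℝ → E → E} {c : E}
    {u h : C(Icc 0 T, E)} (hh : ∀ s, h s = w s (u s)) :
    IsIntegralSolution hT w c u ↔ u = ContinuousLinearMap.const ℝ _ c + primitive hT h := by
  rw [ContinuousMap.ext_iff]
  refine forall_congr' fun t => ?_
  have integral_eq : ∫ s in 0..t, w s (u.IccExtend hT s) = primitive hT h t := by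
    refine intervalIntegral.integral_congr fun s hs => ?_
    rw [uIcc_of_le t.2.1] at hs
    have hsT : s ∈ Icc 0 T := ⟨hs.1, hs.2.trans t.2.2⟩
    change w s (u.IccExtend hT s) = h.IccExtend hT s
    rw [iccExtend_of_mem hT u hsT, iccExtend_of_mem hT h hsT, hh]
  rw [integral_eq]
  rfl

variable [CompleteSpace E]

lemma isIntegralSolution_of_hasDerivAt (hT : 0 ≤ T) {w : ℝ → E → E}
    (hw : Continuous fun q : ℝ × E => w q.1 q.2) {x : ℝ → E}
    (hx : ∀ t, HasDerivAt x (w t (x t)) t) {u : C(Icc 0 T, E)} (hu : ∀ t, u t = x t) :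
    IsIntegralSolution hT w (x 0) u := by
  intro t
  have hcont : Continuous fun s => w s (u.IccExtend hT s) :=
    hw.comp (continuous_id.prodMk (u.IccExtend hT).continuous)
  rw [intervalIntegral.integral_eq_sub_of_hasDerivAt (f := x) (fun s hs => ?_)
    (hcont.intervalIntegrable _ _), hu, add_sub_cancel]
  rw [uIcc_of_le t.2.1] at hs
  have hsT : s ∈ Icc 0 T := ⟨hs.1, hs.2.trans t.2.2⟩
  rw [iccExtend_of_mem hT u hsT, hu]
  exact hx s

theorem IsIntegralSolution.unique {hT : 0 ≤ T} {w : ℝ → E → E}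
    (hw : ContDiff ℝ 1 fun q : ℝ × E => w q.1 q.2) {c : E} {u v : C(Icc 0 T, E)}
    (hu : IsIntegralSolution hT w c u) (hv : IsIntegralSolution hT w c v) : u = v := by
  let w' : ℝ × E → E := fun q => w q.1 q.2
  let A : C(Icc 0 T, E →L[ℝ] E) :=
    ⟨fun s => (averagedFDeriv w' ((s : ℝ), v s) (0, (u - v) s)).comp (.inr ℝ ℝ E),
      ((continuous_averagedFDeriv hw).comp (by fun_prop : Continuous fun s : Icc 0 T =>
        (((s : ℝ), v s), ((0 : ℝ), (u - v) s)))).clm_comp continuous_const⟩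
  let along (y : C(Icc 0 T, E)) : C(Icc 0 T, E) :=
    ⟨fun s => w s (y s), hw.continuous.comp (continuous_subtype_val.prodMk y.continuous)⟩
  have along_sub : along u - along v = mulOperator A (u - v) := by
    ext s
    refine .trans ?_ (averagedFDeriv_apply_self hw ((s : ℝ), v s) (0, (u - v) s)).symm
    simp [along]
  have hfixed : u - v = primitive hT (mulOperator A (u - v)) := by
    rw [← along_sub, map_sub]
    nth_rw 1 [(isIntegralSolution_iff_eq_const_add_primitive (h := along u) fun _ => rfl).1 hu,
      (isIntegralSolution_iff_eq_const_add_primitive (h := along v) fun _ => rfl).1 hv]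
    abel
  have hinj := (ContinuousLinearMap.isUnit_iff_bijective.1
    (isUnit_one_sub_primitive_mulOperator hT A)).1
  exact sub_eq_zero.1 (hinj (by simpa [sub_eq_zero] using hfixed))

end IntegralSolution

section SmoothDependence

variable {P E : Type*} [NormedAddCommGroup P] [NormedSpace ℝ P] [NormedAddCommGroup E]
  [NormedSpace ℝ E]

/-- The map sending `(p, u)` to the curve `s ↦ (p, u s)`. -/
def pairWithConst (K : Type*) [TopologicalSpace K] :
    P × C(K, E) →L[ℝ] C(K, P × E) :=
  (ContinuousLinearMap.inl ℝ P E).compLeftContinuous ℝ K ∘L .const ℝ K ∘L .fst ℝ P C(K, E) +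
    (ContinuousLinearMap.inr ℝ P E).compLeftContinuous ℝ K ∘L .snd ℝ P C(K, E)

@[simp]
lemma pairWithConst_apply {K : Type*} [TopologicalSpace K] (z : P × C(K, E)) (s : K) :
    pairWithConst K z s = (z.1, z.2 s) := by
  simp [pairWithConst]

variable {T : ℝ} (hT : 0 ≤ T) {W : ℝ × P × E → E} (hW : ContDiff ℝ 1 W) (ι : P →L[ℝ] E)

/-- The defect of a curve `u` as a solution of `ẋ = W(t, p, x)`, `x(0) = ι p`, in integrated form,
as a function of `(p, u)`. -/
def integralResidual (z : P × C(Icc 0 T, E)) : C(Icc 0 T, E) :=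
  z.2 - ContinuousLinearMap.const ℝ _ (ι z.1) - primitive hT (nemytskii
    ⟨fun q : Icc 0 T × P × E => W (q.1, q.2), hW.continuous.comp (by fun_prop)⟩
    (pairWithConst (Icc 0 T) z))

/-- The derivative of the vector field `W` in `(p, x)` along the curve `u`. -/
def linearizationAlong (z : P × C(Icc 0 T, E)) : C(Icc 0 T, P × E →L[ℝ] E) :=
  nemytskii ⟨fun q : Icc 0 T × P × E => (fderiv ℝ W (q.1, q.2)).comp (.inr ℝ ℝ (P × E)),
    (continuous_fderiv_comp_inr hW).comp (by fun_prop)⟩ (pairWithConst (Icc 0 T) z)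

lemma integralResidual_eq_zero_iff (z : P × C(Icc 0 T, E)) :
    integralResidual hT hW ι z = 0 ↔
      IsIntegralSolution hT (fun s x => W (s, z.1, x)) (ι z.1) z.2 := by
  rw [isIntegralSolution_iff_eq_const_add_primitive (h := nemytskii
    ⟨fun q : Icc 0 T × P × E => W (q.1, q.2), hW.continuous.comp (by fun_prop)⟩
    (pairWithConst (Icc 0 T) z)) (fun s => by simp), integralResidual, sub_sub, sub_eq_zero]

/-- The derivative of `integralResidual` at `z`. -/
def integralResidualFDeriv (z : P × C(Icc 0 T, E)) : P × C(Icc 0 T, E) →L[ℝ] C(Icc 0 T, E) :=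
  .snd ℝ P C(Icc 0 T, E) - .const ℝ (Icc 0 T) ∘L ι ∘L .fst ℝ P C(Icc 0 T, E) -
    primitive hT ∘L mulOperator (linearizationAlong hW z) ∘L pairWithConst (Icc 0 T)

lemma hasStrictFDerivAt_integralResidual (z : P × C(Icc 0 T, E)) :
    HasStrictFDerivAt (integralResidual hT hW ι) (integralResidualFDeriv hT hW ι z) z := by
  have hnem := hasStrictFDerivAt_nemytskii
    (N := ⟨fun q : Icc 0 T × P × E => W (q.1, q.2), hW.continuous.comp (by fun_prop)⟩)
    (N' := ⟨fun q : Icc 0 T × P × E => (fderiv ℝ W (q.1, q.2)).comp (.inr ℝ ℝ (P × E)),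
      (continuous_fderiv_comp_inr hW).comp (by fun_prop)⟩)
    (fun s v => hasFDerivAt_comp_prodMk_left hW s v) (pairWithConst (Icc 0 T) z)
  let const : P × C(Icc 0 T, E) →L[ℝ] C(Icc 0 T, E) :=
    .const ℝ (Icc 0 T) ∘L ι ∘L .fst ℝ P C(Icc 0 T, E)
  let pair : P × C(Icc 0 T, E) →L[ℝ] C(Icc 0 T, P × E) := pairWithConst (Icc 0 T)
  exact (hasStrictFDerivAt_snd.sub const.hasStrictFDerivAt).sub
    ((primitive hT).hasStrictFDerivAt.comp z (hnem.comp z pair.hasStrictFDerivAt))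

lemma integralResidualFDeriv_apply_eq_zero_iff (z ζ : P × C(Icc 0 T, E)) :
    integralResidualFDeriv hT hW ι z ζ = 0 ↔ IsIntegralSolution hT
      (fun s y => fderiv ℝ W (s, z.1, z.2.IccExtend hT s) (0, ζ.1, y)) (ι ζ.1) ζ.2 := by
  rw [isIntegralSolution_iff_eq_const_add_primitive
    (h := mulOperator (linearizationAlong hW z) (pairWithConst (Icc 0 T) ζ))
    (fun s => by simp [linearizationAlong]), ← sub_eq_zero (a := ζ.2), ← sub_sub]
  rfl

lemma isInvertible_integralResidualFDeriv_comp_inr [CompleteSpace E] (z : P × C(Icc 0 T, E)) :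
    (integralResidualFDeriv hT hW ι z ∘L .inr ℝ P C(Icc 0 T, E)).IsInvertible := by
  let A : C(Icc 0 T, E →L[ℝ] E) :=
    ⟨fun s => linearizationAlong hW z s ∘L .inr ℝ P E,
      (linearizationAlong hW z).continuous.clm_comp continuous_const⟩
  obtain ⟨U, hU⟩ := isUnit_one_sub_primitive_mulOperator hT A
  refine ⟨ContinuousLinearEquiv.unitsEquiv ℝ _ U, ?_⟩
  have hmul (y : C(Icc 0 T, E)) : mulOperator A y =
      mulOperator (linearizationAlong hW z) (pairWithConst (Icc 0 T) (0, y)) := by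
    ext s
    simp [A]
  ext1 y
  calc (U : C(Icc 0 T, E) →L[ℝ] C(Icc 0 T, E)) y = y - primitive hT (mulOperator A y) := by
        rw [hU]; rfl
    _ = integralResidualFDeriv hT hW ι z (0, y) := by
        simp [integralResidualFDeriv, hmul]

/-- The implicit function theorem in `C([0, T], E)`: the partial derivative of the defect in `u` is
the identity minus a Volterra operator. -/
theorem hasStrictFDerivAt_of_isIntegralSolution [CompleteSpace P] [CompleteSpace E]
    {hT : 0 ≤ T} {W : ℝ × P × E → E} (hW : ContDiff ℝ 1 W) {ι : P →L[ℝ] E}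
    {X : P → C(Icc 0 T, E)}
    (hX : ∀ p, IsIntegralSolution hT (fun s x => W (s, p, x)) (ι p) (X p)) (p₀ : P) :
    ∃ Y : P →L[ℝ] C(Icc 0 T, E), HasStrictFDerivAt X Y p₀ ∧
      ∀ q, IsIntegralSolution hT
        (fun s y => fderiv ℝ W (s, p₀, (X p₀).IccExtend hT s) (0, q, y)) (ι q) (Y q) := by
  have hres := hasStrictFDerivAt_integralResidual hT hW ι (p₀, X p₀)
  have hinv := isInvertible_integralResidualFDeriv_comp_inr hT hW ι (p₀, X p₀)
  have hzero (p : P) : integralResidual hT hW ι (p, X p) = 0 :=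
    (integralResidual_eq_zero_iff hT hW ι _).2 (hX p)
  have hψX : hres.implicitFunctionOfProdDomain hinv =ᶠ[𝓝 p₀] X := by
    filter_upwards [hres.eventually_apply_implicitFunctionOfProdDomain hinv] with p hp
    rw [hzero, integralResidual_eq_zero_iff] at hp
    exact hp.unique (hW.comp (by fun_prop : ContDiff ℝ 1 fun q : ℝ × E => (q.1, p, q.2))) (hX p)
  obtain ⟨Y, hY⟩ : ∃ Y, HasStrictFDerivAt X Y p₀ :=
    ⟨_, (hres.hasStrictFDerivAt_implicitFunctionOfProdDomain hinv).congr_of_eventuallyEq hψX⟩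
  refine ⟨Y, hY, fun q =>
    (integralResidualFDeriv_apply_eq_zero_iff hT hW ι (p₀, X p₀) (q, _)).1 ?_⟩
  have hvanish := (hres.comp p₀ ((hasStrictFDerivAt_id p₀).prodMk hY)).hasFDerivAt.unique
    ((hasFDerivAt_const (0 : C(Icc 0 T, E)) p₀).congr_of_eventuallyEq (.of_forall hzero))
  exact DFunLike.congr_fun hvanish q

end SmoothDependence

section LinearAlgebra

lemma mem_span_singleton_of_finrank_le_one {K V : Type*} [DivisionRing K] [AddCommGroup V]
    [Module K V] {S : Submodule K V} [FiniteDimensional K S] (hS : Module.finrank K S ≤ 1) {p h : V}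
    (hp : p ∈ S) (hp₀ : p ≠ 0) (hh : h ∈ S) : h ∈ Submodule.span K {p} := by
  have heq : Submodule.span K {p} = S := Submodule.eq_of_le_of_finrank_le
    ((Submodule.span_singleton_le_iff_mem p S).2 hp) (hS.trans (finrank_span_singleton hp₀).ge)
  rwa [heq]

variable {E : Type*} [NormedAddCommGroup E] [InnerProductSpace ℝ E]

lemma eq_zero_of_mem_span_singleton_of_inner_eq_zero {h p z : E} (hh : h ∈ Submodule.span ℝ {p})
    (hpz : ⟪p, z⟫_ℝ ≠ 0) (hhz : ⟪h, z⟫_ℝ = 0) : h = 0 := by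
  obtain ⟨c, rfl⟩ := Submodule.mem_span_singleton.1 hh
  rw [real_inner_smul_left, mul_eq_zero, or_iff_left hpz] at hhz
  rw [hhz, zero_smul]

/-- The operator `L` bordered by the column `w` and the row `⟪z, ·⟫`. -/
def borderedOperator (L : E →L[ℝ] E) (w z : E) : ℝ × E →L[ℝ] E × ℝ :=
  ((ContinuousLinearMap.fst ℝ ℝ E).smulRight w + L ∘L .snd ℝ ℝ E).prod
    (innerSL ℝ z ∘L .snd ℝ ℝ E)

theorem isInvertible_borderedOperator [FiniteDimensional ℝ E] {L : E →L[ℝ] E} {p w z : E}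
    (hLz : ∀ h, ⟪L h, z⟫_ℝ = 0) (hker : ∀ h, L h = 0 → h ∈ Submodule.span ℝ {p})
    (hpz : ⟪p, z⟫_ℝ ≠ 0) (hwz : ⟪w, z⟫_ℝ ≠ 0) : (borderedOperator L w z).IsInvertible := by
  have hinj : Function.Injective (borderedOperator L w z).toLinearMap := by
    refine (injective_iff_map_eq_zero _).2 fun ⟨τ, h⟩ hzero => ?_
    obtain ⟨heq, hhz⟩ : τ • w + L h = 0 ∧ ⟪z, h⟫_ℝ = 0 := Prod.mk_eq_zero.1 hzero
    have hτ : τ = 0 := by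
      have := congrArg (⟪·, z⟫_ℝ) heq
      simpa [inner_add_left, real_inner_smul_left, hLz, hwz] using this
    subst hτ
    rw [zero_smul, zero_add] at heq
    rw [real_inner_comm] at hhz
    rw [eq_zero_of_mem_span_singleton_of_inner_eq_zero (hker h heq) hpz hhz, Prod.mk_zero_zero]
  exact ⟨(LinearEquiv.ofInjectiveOfFinrankEq _ hinj (by simp [add_comm])).toContinuousLinearEquiv,
    rfl⟩

end LinearAlgebra

section ImplicitFunction

/-- Outside the neighbourhood controlled by the implicit function theorem, zeros of `G (p, ·)` on
the compact set `K` are excluded for `p` near `p₀` by compactness. -/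
theorem exists_unique_zero_branch_on_compact {P V W : Type*} [NormedAddCommGroup P]
    [NormedSpace ℝ P] [CompleteSpace P] [NormedAddCommGroup V] [NormedSpace ℝ V] [CompleteSpace V]
    [NormedAddCommGroup W] [NormedSpace ℝ W] [CompleteSpace W] {G : P × V → W}
    {G' : P × V →L[ℝ] W} {p₀ : P} {v₀ : V} {K : Set V} (hK : IsCompact K)
    (hG : HasStrictFDerivAt G G' (p₀, v₀)) (hG' : (G' ∘L .inr ℝ P V).IsInvertible)
    (hv₀ : G (p₀, v₀) = 0) (hcont : ∀ v ∈ K, ContinuousAt G (p₀, v))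
    (huniq : ∀ v ∈ K, G (p₀, v) = 0 → v = v₀) :
    ∃ φ : P → V, Tendsto φ (𝓝 p₀) (𝓝 v₀) ∧
      ∀ᶠ p in 𝓝 p₀, G (p, φ p) = 0 ∧ ∀ v ∈ K, G (p, v) = 0 → v = φ p := by
  refine ⟨hG.implicitFunctionOfProdDomain hG', hG.tendsto_implicitFunctionOfProdDomain hG', ?_⟩
  have hlocal (v : V) (hv : v ∈ K) : ∀ᶠ q : P × V in 𝓝 (p₀, v),
      G (q.1, q.2) = 0 → q.2 = hG.implicitFunctionOfProdDomain hG' q.1 := by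
    by_cases hvv : v = v₀
    · subst hvv
      filter_upwards [hG.eventually_apply_eq_iff_implicitFunctionOfProdDomain hG'] with q hq hzero
      exact (hq.1 (hzero.trans hv₀.symm)).symm
    · filter_upwards [(hcont v hv).eventually_ne fun hzero => hvv (huniq v hv hzero)]
        with q hne hzero
      exact absurd hzero hne
  filter_upwards [hK.eventually_forall_of_forall_eventually (P := fun p v => G (p, v) = 0 →
      v = hG.implicitFunctionOfProdDomain hG' p) hlocal,
    hG.eventually_apply_implicitFunctionOfProdDomain hG'] with p hp hφ
  exact ⟨hφ.trans hv₀, hp⟩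

end ImplicitFunction

section Bifurcation

variable {E : Type*} [NormedAddCommGroup E]

lemma eq_fderiv_apply_of_smul_eq [NormedSpace ℝ E] {F : ℝ × E → E} {F' : ℝ × E →L[ℝ] E} {a η : E}
    (hF : HasFDerivAt F F' (0, a)) {G : ℝ → E} (hG : ContinuousAt G 0)
    (hGF : ∀ ε, ε • G ε = F (ε, a + ε • η)) : G 0 = F' (1, η) := by
  have hcurve : HasDerivAt (fun ε : ℝ => (ε, a + ε • η)) (1, η) 0 := by
    simpa using (hasDerivAt_id (0 : ℝ)).prodMk (((hasDerivAt_id (0 : ℝ)).smul_const η).const_add a)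
  have hderiv : HasDerivAt (fun ε => ε • G ε) (F' (1, η)) 0 := by
    rw [funext hGF]
    exact HasFDerivAt.comp_hasDerivAt 0 (by simpa using hF) hcurve
  have hslope : Tendsto G (𝓝[≠] 0) (𝓝 (F' (1, η))) := by
    refine (hasDerivAt_iff_tendsto_slope.1 hderiv).congr' ?_
    filter_upwards [self_mem_nhdsWithin] with ε hε
    simp [slope_def_module, inv_smul_smul₀ (show ε ≠ 0 from hε)]
  exact tendsto_nhds_unique (hG.tendsto.mono_left nhdsWithin_le_nhds) hslope

variable [InnerProductSpace ℝ E]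

lemma eventually_exists_inner_sub_eq_zero {γ : ℝ → E} {p z : E} {θ₀ : ℝ}
    (hγ : HasStrictDerivAt γ p θ₀) (hpz : ⟪p, z⟫_ℝ ≠ 0) {U : Set ℝ} (hU : U ∈ 𝓝 θ₀) :
    ∀ᶠ u in 𝓝 (γ θ₀), ∃ θ ∈ U, ⟪u - γ θ, z⟫_ℝ = 0 := by
  have hphase : HasStrictDerivAt (fun θ => ⟪z, γ θ⟫_ℝ) ⟪z, p⟫_ℝ θ₀ :=
    (innerSL ℝ z).hasStrictFDerivAt.comp_hasStrictDerivAt θ₀ hγ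
  have himage : (fun θ => ⟪z, γ θ⟫_ℝ) '' U ∈ 𝓝 ⟪z, γ θ₀⟫_ℝ := by
    rw [← hphase.map_nhds_eq (by rwa [real_inner_comm])]
    exact image_mem_map hU
  have hinner : Tendsto (fun u => ⟪z, u⟫_ℝ) (𝓝 (γ θ₀)) (𝓝 ⟪z, γ θ₀⟫_ℝ) :=
    (innerSL ℝ z).continuous.tendsto _
  filter_upwards [hinner.eventually_mem himage] with u ⟨θ, hθ, heq⟩
  exact ⟨θ, hθ, by rw [real_inner_comm, inner_sub_right, sub_eq_zero, ← heq]⟩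

/-- The a priori bound that makes the rescaling `w = ε η` legitimate. -/
lemma exists_norm_le_mul_abs_of_apply_eq_zero [FiniteDimensional ℝ E] {F : ℝ × E → E}
    {F' : ℝ × E →L[ℝ] E} {a z : E} (hF : HasStrictFDerivAt F F' (0, a))
    (hinj : ∀ h, F' (0, h) = 0 → ⟪h, z⟫_ℝ = 0 → h = 0) :
    ∃ C : ℝ, ∀ᶠ q : ℝ × E × E in 𝓝 (0, a, a), F (q.1, q.2.1) = 0 → F (0, q.2.2) = 0 →
      ⟪q.2.1 - q.2.2, z⟫_ℝ = 0 → ‖q.2.1 - q.2.2‖ ≤ C * |q.1| := by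
  let B : E →L[ℝ] E × ℝ := (F' ∘L .inr ℝ ℝ E).prod (innerSL ℝ z)
  obtain ⟨κ, _hκ, hB⟩ : ∃ κ > 0, AntilipschitzWith κ B :=
    (LinearMap.injective_iff_antilipschitz B.toLinearMap).1 <|
      (injective_iff_map_eq_zero _).2 fun h hh =>
        hinj h (congrArg Prod.fst hh) (by rw [real_inner_comm]; exact congrArg Prod.snd hh)
  refine ⟨2 * κ * ‖F'‖ + 1, ?_⟩
  have hpair : Tendsto (fun q : ℝ × E × E => ((q.1, q.2.1), ((0 : ℝ), q.2.2))) (𝓝 (0, a, a))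
      (𝓝 ((0, a), (0, a))) := Continuous.tendsto (by fun_prop) _
  filter_upwards [hpair.eventually (hF.isLittleO.def (c := 1 / (2 * κ)) (by positivity))]
    with ⟨ε, u, y⟩ hlittle hu hy huy
  dsimp only at hu hy huy hlittle ⊢
  set w := u - y
  rw [hu, hy, sub_zero, zero_sub, norm_neg, Prod.mk_sub_mk, sub_zero] at hlittle
  have hsplit : F' (0, w) = F' (ε, w) - F' (ε, 0) := by
    rw [← map_sub, Prod.mk_sub_mk, sub_self, sub_zero]
  have hpair_norm : ‖(ε, w)‖ ≤ |ε| + ‖w‖ := by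
    rw [Prod.norm_mk, Real.norm_eq_abs]
    exact max_le_add_of_nonneg (abs_nonneg _) (norm_nonneg _)
  have hw : ‖w‖ ≤ κ * (1 / (2 * κ) * (|ε| + ‖w‖) + ‖F'‖ * |ε|) := by
    calc ‖w‖ ≤ κ * ‖B w‖ := by simpa using hB.le_mul_dist w 0
      _ = κ * ‖F' (0, w)‖ := by
        rw [show B w = (F' (0, w), 0) from Prod.ext rfl (by rw [real_inner_comm] at huy; exact huy)]
        simp
      _ ≤ κ * (‖F' (ε, w)‖ + ‖F' (ε, 0)‖) := by rw [hsplit]; gcongr; exact norm_sub_le _ _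
      _ ≤ κ * (1 / (2 * κ) * (|ε| + ‖w‖) + ‖F'‖ * |ε|) := by
        gcongr
        · exact hlittle.trans (by gcongr)
        · simpa using F'.le_opNorm (ε, 0)
  have hκ_cancel : (κ : ℝ) * (1 / (2 * κ) * (|ε| + ‖w‖)) = (|ε| + ‖w‖) / 2 := by field_simp
  linarith

end Bifurcation

section BlowUp

/-- `G` is the blow-up of the equation `F (ε, u) = 0` along the curve `γ` of zeros of `F (0, ·)` in
the coordinates `u = γ θ + ε η`; at `ε = 0` its component along the adjoint vector `z θ` is the
bifurcation function `M`, whatever `η` is. -/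
structure IsBlowUp {E : Type*} [NormedAddCommGroup E] [InnerProductSpace ℝ E] (F : ℝ × E → E)
    (G : ℝ × ℝ × E → E) (γ z : ℝ → E) (M : ℝ → ℝ) : Prop where
  exists_hasStrictFDerivAt : ∀ q, ∃ G' : ℝ × ℝ × E →L[ℝ] E, HasStrictFDerivAt G G' q
  smul_eq : ∀ (ε θ : ℝ) (η : E), ε • G (ε, θ, η) = F (ε, γ θ + ε • η)
  inner_eq : ∀ θ η, ⟪G (0, θ, η), z θ⟫_ℝ = M θ

/-- The blown-up equation together with the phase condition `⟪z, η⟫ = 0`, which singles out one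
of the representations `u = γ θ + ε η` of a point near the curve. -/
def withPhaseCondition {E : Type*} [NormedAddCommGroup E] [InnerProductSpace ℝ E]
    (G : ℝ × ℝ × E → E) (z : E) (q : ℝ × ℝ × E) : E × ℝ := (G q, ⟪z, q.2.2⟫_ℝ)

variable {E : Type*} [NormedAddCommGroup E] [InnerProductSpace ℝ E] {F : ℝ × E → E}
  {F' : ℝ × E →L[ℝ] E} {G : ℝ × ℝ × E → E} {γ z : ℝ → E} {M : ℝ → ℝ} {p : E} {m θ₀ : ℝ}

lemma withPhaseCondition_eq_zero_iff {z : E} {q : ℝ × ℝ × E} :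
    withPhaseCondition G z q = 0 ↔ G q = 0 ∧ ⟪z, q.2.2⟫_ℝ = 0 := Prod.mk_eq_zero

namespace IsBlowUp

lemma continuous (hG : IsBlowUp F G γ z M) : Continuous G :=
  continuous_iff_continuousAt.2 fun q => (hG.exists_hasStrictFDerivAt q).choose_spec.continuousAt

lemma apply_curve (hG : IsBlowUp F G γ z M) (θ : ℝ) : F (0, γ θ) = 0 := by
  simpa using (hG.smul_eq 0 θ 0).symm

lemma apply_zero_eq_fderiv (hG : IsBlowUp F G γ z M) {θ : ℝ} (hF : HasFDerivAt F F' (0, γ θ))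
    (η : E) : G (0, θ, η) = F' (1, η) :=
  eq_fderiv_apply_of_smul_eq (G := fun ε => G (ε, θ, η)) hF
    (hG.continuous.comp (by fun_prop)).continuousAt fun ε => hG.smul_eq ε θ η

lemma inner_fderiv_eq_zero (hG : IsBlowUp F G γ z M) {θ : ℝ} (hF : HasFDerivAt F F' (0, γ θ))
    (h : E) : ⟪F' (0, h), z θ⟫_ℝ = 0 := by
  have hsplit : F' (0, h) = G (0, θ, h) - G (0, θ, 0) := by
    rw [hG.apply_zero_eq_fderiv hF, hG.apply_zero_eq_fderiv hF, ← map_sub]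
    simp
  rw [hsplit, inner_sub_left, hG.inner_eq, hG.inner_eq, sub_self]

lemma fderiv_apply_zero_zero (hG : IsBlowUp F G γ z M) (hF : HasFDerivAt F F' (0, γ θ₀)) {η₀ : E}
    {G' : ℝ × ℝ × E →L[ℝ] E} (hG' : HasFDerivAt G G' (0, θ₀, η₀)) (h : E) :
    G' (0, 0, h) = F' (0, h) := by
  have hline (η : E) : HasFDerivAt (fun η : E => ((0 : ℝ), θ₀, η)) (.inr ℝ ℝ _ ∘L .inr ℝ ℝ E) η :=
    (hasFDerivAt_prodMk_right _ _).comp η (hasFDerivAt_prodMk_right _ _)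
  have haffine : HasFDerivAt (fun η => F' (1, η)) (F' ∘L .inr ℝ ℝ E) η₀ :=
    F'.hasFDerivAt.comp η₀ (hasFDerivAt_prodMk_right 1 η₀)
  have hderiv := (hG'.comp η₀ (hline η₀)).unique (haffine.congr_of_eventuallyEq
    (.of_forall fun η => hG.apply_zero_eq_fderiv hF η))
  exact DFunLike.congr_fun hderiv h

lemma inner_fderiv_apply_phase (hG : IsBlowUp F G γ z M) {η₀ : E} (hη₀ : G (0, θ₀, η₀) = 0)
    {G' : ℝ × ℝ × E →L[ℝ] E} (hG' : HasFDerivAt G G' (0, θ₀, η₀)) (hz : DifferentiableAt ℝ z θ₀)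
    (hM : HasDerivAt M m θ₀) : ⟪G' (0, 1, 0), z θ₀⟫_ℝ = m := by
  have hline : HasDerivAt (fun θ => ((0 : ℝ), θ, η₀)) (0, 1, 0) θ₀ :=
    (hasDerivAt_const θ₀ 0).prodMk ((hasDerivAt_id θ₀).prodMk (hasDerivAt_const θ₀ η₀))
  have hinner := (hG'.comp_hasDerivAt θ₀ hline).inner ℝ hz.hasDerivAt
  have hMinner : HasDerivAt (fun θ => ⟪G (0, θ, η₀), z θ⟫_ℝ) m θ₀ := by
    simpa only [hG.inner_eq] using hM
  simpa [hη₀] using hinner.unique hMinner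

lemma eventually_unique_zero (hG : IsBlowUp F G γ z M) (hF : HasFDerivAt F F' (0, γ θ₀))
    (hker : ∀ h, F' (0, h) = 0 → h ∈ Submodule.span ℝ {p}) (hpz : ⟪p, z θ₀⟫_ℝ ≠ 0)
    (hM₀ : M θ₀ = 0) (hM : HasDerivAt M m θ₀) (hm : m ≠ 0) {η₀ : E}
    (hη₀ : withPhaseCondition G (z θ₀) (0, θ₀, η₀) = 0) :
    ∀ᶠ θ in 𝓝 θ₀, ∀ η, withPhaseCondition G (z θ₀) (0, θ, η) = 0 → (θ, η) = (θ₀, η₀) := by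
  have hMne : ∀ᶠ θ in 𝓝 θ₀, θ ≠ θ₀ → M θ ≠ 0 := eventually_nhdsWithin_iff.1 (hM.eventually_ne hm)
  filter_upwards [hMne] with θ hθ η hη
  rw [withPhaseCondition_eq_zero_iff] at hη hη₀
  obtain rfl : θ = θ₀ := by
    by_contra hne
    exact hθ hne (by rw [← hG.inner_eq θ η, hη.1, inner_zero_left])
  have hdiff : F' (0, η - η₀) = 0 := by
    rw [show ((0 : ℝ), η - η₀) = (1, η) - (1, η₀) by simp, map_sub,
      ← hG.apply_zero_eq_fderiv hF, ← hG.apply_zero_eq_fderiv hF, hη.1, hη₀.1, sub_zero]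
  rw [sub_eq_zero.1 (eq_zero_of_mem_span_singleton_of_inner_eq_zero (hker _ hdiff) hpz
    (by rw [real_inner_comm, inner_sub_right, hη.2, hη₀.2, sub_zero]))]

variable [FiniteDimensional ℝ E]

/-- Solvability is the Fredholm alternative: `M θ₀ = 0` says that `F' (1, 0)` is orthogonal to the
cokernel direction `z θ₀`. -/
lemma exists_apply_eq_zero (hG : IsBlowUp F G γ z M) (hF : HasFDerivAt F F' (0, γ θ₀))
    (hker : ∀ h, F' (0, h) = 0 → h ∈ Submodule.span ℝ {p}) (hpz : ⟪p, z θ₀⟫_ℝ ≠ 0)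
    (hM₀ : M θ₀ = 0) : ∃ η, G (0, θ₀, η) = 0 ∧ ⟪z θ₀, η⟫_ℝ = 0 := by
  obtain ⟨B, hB⟩ := isInvertible_borderedOperator (L := F' ∘L .inr ℝ ℝ E)
    (hG.inner_fderiv_eq_zero hF) hker hpz hpz
  obtain ⟨⟨τ, η⟩, hτη⟩ := B.surjective (-F' (1, 0), 0)
  replace hτη : borderedOperator (F' ∘L .inr ℝ ℝ E) p (z θ₀) (τ, η) = (-F' (1, 0), 0) :=
    hB ▸ hτη
  obtain ⟨heq, hηz⟩ : τ • p + F' (0, η) = -F' (1, 0) ∧ ⟪z θ₀, η⟫_ℝ = 0 := Prod.mk.inj hτη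
  have hτ : τ = 0 := by
    have hpair := congrArg (⟪·, z θ₀⟫_ℝ) heq
    simpa [inner_add_left, real_inner_smul_left, hG.inner_fderiv_eq_zero hF,
      ← hG.apply_zero_eq_fderiv hF, hG.inner_eq, hM₀, hpz] using hpair
  refine ⟨η, ?_, hηz⟩
  rw [hτ, zero_smul, zero_add] at heq
  rw [hG.apply_zero_eq_fderiv hF, show ((1 : ℝ), η) = (1, 0) + (0, η) by simp, map_add, heq,
    add_neg_cancel]

lemma isInvertible_fderiv_comp_inr (hG : IsBlowUp F G γ z M)
    (hF : HasFDerivAt F F' (0, γ θ₀)) (hker : ∀ h, F' (0, h) = 0 → h ∈ Submodule.span ℝ {p})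
    (hpz : ⟪p, z θ₀⟫_ℝ ≠ 0) (hz : DifferentiableAt ℝ z θ₀) (hM : HasDerivAt M m θ₀) (hm : m ≠ 0)
    {η₀ : E} (hη₀ : G (0, θ₀, η₀) = 0) {G' : ℝ × ℝ × E →L[ℝ] E}
    (hG' : HasFDerivAt G G' (0, θ₀, η₀)) :
    ((G'.prod (innerSL ℝ (z θ₀) ∘L .snd ℝ ℝ E ∘L .snd ℝ ℝ (ℝ × E))) ∘L
      .inr ℝ ℝ (ℝ × E)).IsInvertible := by
  have hinv := isInvertible_borderedOperator (L := F' ∘L .inr ℝ ℝ E) (w := G' (0, 1, 0))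
    (hG.inner_fderiv_eq_zero hF) hker hpz
    (by rwa [hG.inner_fderiv_apply_phase hη₀ hG' hz hM])
  convert hinv using 1
  refine ContinuousLinearMap.ext fun ⟨τ, h⟩ => Prod.ext ?_ rfl
  calc G' (0, τ, h) = τ • G' (0, 1, 0) + G' (0, 0, h) := by rw [← map_smul, ← map_add]; simp
    _ = τ • G' (0, 1, 0) + F' (0, h) := by rw [hG.fderiv_apply_zero_zero hF hG']

theorem exists_zero_branch (hG : IsBlowUp F G γ z M) (hF : HasFDerivAt F F' (0, γ θ₀))
    (hker : ∀ h, F' (0, h) = 0 → h ∈ Submodule.span ℝ {p}) (hpz : ⟪p, z θ₀⟫_ℝ ≠ 0)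
    (hz : DifferentiableAt ℝ z θ₀) (hM₀ : M θ₀ = 0) (hM : HasDerivAt M m θ₀) (hm : m ≠ 0) :
    ∃ η₀, ∃ r > 0, ∀ C, ∃ φ : ℝ → ℝ × E, Tendsto φ (𝓝 0) (𝓝 (θ₀, η₀)) ∧ ∀ᶠ ε in 𝓝 0,
      withPhaseCondition G (z θ₀) (ε, φ ε) = 0 ∧
      ∀ q ∈ Metric.closedBall θ₀ r ×ˢ Metric.closedBall 0 C,
        withPhaseCondition G (z θ₀) (ε, q) = 0 → q = φ ε := by
  obtain ⟨η₀, hη₀⟩ := hG.exists_apply_eq_zero hF hker hpz hM₀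
  obtain ⟨r, hr, hunique⟩ := Metric.nhds_basis_closedBall.eventually_iff.1 <|
    hG.eventually_unique_zero hF hker hpz hM₀ hM hm (withPhaseCondition_eq_zero_iff.2 hη₀)
  obtain ⟨G', hG'⟩ := hG.exists_hasStrictFDerivAt (0, θ₀, η₀)
  let phase : ℝ × ℝ × E →L[ℝ] ℝ := innerSL ℝ (z θ₀) ∘L .snd ℝ ℝ E ∘L .snd ℝ ℝ (ℝ × E)
  exact ⟨η₀, r, hr, fun C => exists_unique_zero_branch_on_compact
    ((isCompact_closedBall θ₀ r).prod (isCompact_closedBall 0 C))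
    (hG'.prodMk phase.hasStrictFDerivAt)
    (hG.isInvertible_fderiv_comp_inr hF hker hpz hz hM hm hη₀.1 hG'.hasFDerivAt)
    (withPhaseCondition_eq_zero_iff.2 hη₀)
    (fun q _ => (hG.continuous.prodMk phase.continuous).continuousAt)
    fun q hq => hunique hq.1 q.2⟩

/-- Zeros near the curve lie at distance `O(ε)` from it, so the blow-up sees all of them. -/
lemma exists_forall_eventually_exists_rescaled (hG : IsBlowUp F G γ z M)
    (hF : HasStrictFDerivAt F F' (0, γ θ₀)) (hγ : HasStrictDerivAt γ p θ₀)
    (hker : ∀ h, F' (0, h) = 0 → h ∈ Submodule.span ℝ {p}) (hpz : ⟪p, z θ₀⟫_ℝ ≠ 0) :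
    ∃ C, ∀ U ∈ 𝓝 θ₀, ∀ᶠ q in 𝓝[>] 0 ×ˢ 𝓝 (γ θ₀), F q = 0 → ∃ θ ∈ U, ∃ η, ‖η‖ ≤ C ∧
      q.2 = γ θ + q.1 • η ∧ withPhaseCondition G (z θ₀) (q.1, θ, η) = 0 := by
  obtain ⟨C, hC⟩ := exists_norm_le_mul_abs_of_apply_eq_zero hF fun h hh =>
    eq_zero_of_mem_span_singleton_of_inner_eq_zero (hker h hh) hpz
  rw [nhds_prod_eq, nhds_prod_eq, eventually_prod_iff] at hC
  obtain ⟨Pε, hPε, Q, hQ, hC⟩ := hC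
  obtain ⟨Pu, hPu, Pγ, hPγ, hQ⟩ := eventually_prod_iff.1 hQ
  refine ⟨C, fun U hU => ?_⟩
  have hphase := eventually_exists_inner_sub_eq_zero hγ hpz <|
    inter_mem hU (hγ.hasDerivAt.continuousAt.eventually hPγ)
  filter_upwards [prod_mem_prod (inter_mem self_mem_nhdsWithin (nhdsWithin_le_nhds hPε))
    (hPu.and hphase)] with ⟨ε, u⟩ ⟨⟨(hε : 0 < ε), hε_small⟩, hu_near, θ, ⟨hθ, hγθ⟩, hθ_phase⟩ hu
  dsimp only at hθ_phase ⊢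
  have hbound : ‖u - γ θ‖ ≤ C * ε := by
    simpa only [abs_of_pos hε] using
      hC hε_small (hQ hu_near hγθ) hu (hG.apply_curve θ) hθ_phase
  have hu_eq : u = γ θ + ε • ε⁻¹ • (u - γ θ) := by
    rw [smul_inv_smul₀ hε.ne', add_sub_cancel]
  have hsmul : ε • G (ε, θ, ε⁻¹ • (u - γ θ)) = 0 := by rw [hG.smul_eq, ← hu_eq, hu]
  refine ⟨θ, hθ, ε⁻¹ • (u - γ θ), ?_, hu_eq, withPhaseCondition_eq_zero_iff.2
    ⟨(smul_eq_zero_iff_right hε.ne').1 hsmul, ?_⟩⟩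
  · rwa [norm_smul, norm_inv, Real.norm_of_nonneg hε.le, inv_mul_le_iff₀ hε, mul_comm]
  · rw [inner_smul_right, real_inner_comm, hθ_phase, mul_zero]

theorem exists_unique_zero (hG : IsBlowUp F G γ z M) (hF : HasStrictFDerivAt F F' (0, γ θ₀))
    (hγ : HasStrictDerivAt γ p θ₀)
    (hker : ∀ h, F' (0, h) = 0 → h ∈ Submodule.span ℝ {p}) (hpz : ⟪p, z θ₀⟫_ℝ ≠ 0)
    (hz : DifferentiableAt ℝ z θ₀) (hM₀ : M θ₀ = 0) (hM : HasDerivAt M m θ₀) (hm : m ≠ 0) :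
    ∃ v : ℝ → E, Tendsto v (𝓝 0) (𝓝 (γ θ₀)) ∧
      ∀ᶠ q in 𝓝[>] 0 ×ˢ 𝓝 (γ θ₀), F q = 0 ↔ q.2 = v q.1 := by
  obtain ⟨η₀, r, hr, hbranch⟩ := hG.exists_zero_branch hF.hasFDerivAt hker hpz hz hM₀ hM hm
  obtain ⟨C, hC⟩ := hG.exists_forall_eventually_exists_rescaled hF hγ hker hpz
  obtain ⟨φ, hφ, hzero⟩ := hbranch C
  refine ⟨fun ε => γ (φ ε).1 + ε • (φ ε).2, ?_, ?_⟩
  · have hθ : Tendsto (fun ε => γ (φ ε).1) (𝓝 0) (𝓝 (γ θ₀)) :=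
      hγ.hasDerivAt.continuousAt.tendsto.comp hφ.fst_nhds
    simpa using hθ.add (tendsto_id.smul hφ.snd_nhds)
  · filter_upwards [hC _ (Metric.closedBall_mem_nhds θ₀ hr),
      (hzero.filter_mono nhdsWithin_le_nhds).prod_inl _]
      with ⟨ε, u⟩ hrescaled ⟨hφ_zero, hφ_unique⟩
    refine ⟨fun hu => ?_, fun hu => ?_⟩
    · obtain ⟨θ, hθ, η, hη, hu_eq, hq⟩ := hrescaled hu
      rw [hu_eq, ← hφ_unique (θ, η) ⟨hθ, mem_closedBall_zero_iff.2 hη⟩ hq]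
    · dsimp only at hu
      rw [hu, ← hG.smul_eq, (withPhaseCondition_eq_zero_iff.1 hφ_zero).1, smul_zero]

end IsBlowUp

end BlowUp

section AdjointEquation

variable {E : Type*} [NormedAddCommGroup E] [InnerProductSpace ℝ E] [CompleteSpace E] {T : ℝ}

theorem IsIntegralSolution.inner_sub_inner_eq_integral {hT : 0 ≤ T} {A : ℝ → E →L[ℝ] E}
    {b : ℝ → E} (hA : Continuous A) (hb : Continuous b) {c : E} {y : C(Icc 0 T, E)}
    (hy : IsIntegralSolution hT (fun s y => A s y + b s) c y) {z : ℝ → E}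
    (hz : ∀ t, HasDerivAt z (-(ContinuousLinearMap.adjoint (A t) (z t))) t) :
    ⟪y ⟨T, right_mem_Icc.2 hT⟩, z T⟫_ℝ - ⟪c, z 0⟫_ℝ = ∫ s in 0..T, ⟪b s, z s⟫_ℝ := by
  let w (s : ℝ) : E := A s (y.IccExtend hT s) + b s
  let Y (t : ℝ) : E := c + ∫ s in 0..t, w s
  have hw : Continuous w := (hA.clm_apply (y.IccExtend hT).continuous).add hb
  have hz_cont : Continuous z := continuous_iff_continuousAt.2 fun t => (hz t).continuousAt
  have hY (t : ℝ) : HasDerivAt Y (w t) t :=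
    (hw.integral_hasStrictDerivAt 0 t).hasDerivAt.const_add c
  have hYy (t : ℝ) (ht : t ∈ Icc 0 T) : Y t = y.IccExtend hT t := by
    rw [iccExtend_of_mem hT y ht]
    exact (hy ⟨t, ht⟩).symm
  have hderiv (t : ℝ) (ht : t ∈ uIcc 0 T) :
      HasDerivAt (fun t => ⟪Y t, z t⟫_ℝ) ⟪b t, z t⟫_ℝ t := by
    rw [uIcc_of_le hT] at ht
    refine ((hY t).inner ℝ (hz t)).congr_deriv ?_
    rw [inner_neg_right, ContinuousLinearMap.adjoint_inner_right, hYy t ht, inner_add_left]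
    ring
  rw [intervalIntegral.integral_eq_sub_of_hasDerivAt hderiv
    ((hb.inner hz_cont).intervalIntegrable _ _), hYy T (right_mem_Icc.2 hT),
    iccExtend_of_mem hT y (right_mem_Icc.2 hT)]
  simp [Y]

end AdjointEquation

section Perturbation

variable {E : Type*} [NormedAddCommGroup E] [NormedSpace ℝ E]

/-- The perturbed vector field `f(x) + ε g(s, x, ε)` at `(s, (ε, v), x)`; the initial value `v`
is carried along as a second parameter. -/
def perturbedField (f : E → E) (g : ℝ → E → ℝ → E) (q : ℝ × (ℝ × E) × E) : E :=
  f q.2.2 + q.2.1.1 • g q.1 q.2.2 q.2.1.1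

/-- The vector field at `(s, (ε, θ, η), y)` of the equation satisfied by `y` when
`x(s) = γ(s + θ) + ε y(s)` solves the perturbed equation; it makes sense at `ε = 0`. -/
def rescaledField (f : E → E) (g : ℝ → E → ℝ → E) (γ : ℝ → E) (q : ℝ × (ℝ × ℝ × E) × E) : E :=
  averagedFDeriv f (γ (q.1 + q.2.1.2.1)) (q.2.1.1 • q.2.2) q.2.2 +
    g q.1 (γ (q.1 + q.2.1.2.1) + q.2.1.1 • q.2.2) q.2.1.1

variable {f : E → E} {g : ℝ → E → ℝ → E} {γ : ℝ → E}

lemma contDiff_perturbedField (hf : ContDiff ℝ 1 f)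
    (hg : ContDiff ℝ 1 fun p : ℝ × E × ℝ => g p.1 p.2.1 p.2.2) :
    ContDiff ℝ 1 (perturbedField f g) :=
  (hf.comp (by fun_prop)).add (ContDiff.smul (by fun_prop)
    (hg.comp (by fun_prop : ContDiff ℝ 1 fun q : ℝ × (ℝ × E) × E => (q.1, q.2.2, q.2.1.1))))

lemma contDiff_rescaledField (hf : ContDiff ℝ 2 f)
    (hg : ContDiff ℝ 1 fun p : ℝ × E × ℝ => g p.1 p.2.1 p.2.2) (hγ : ContDiff ℝ 1 γ) :
    ContDiff ℝ 1 (rescaledField f g γ) := by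
  have hcurve : ContDiff ℝ 1 fun q : ℝ × (ℝ × ℝ × E) × E => γ (q.1 + q.2.1.2.1) :=
    hγ.comp (by fun_prop)
  have hscaled : ContDiff ℝ 1 fun q : ℝ × (ℝ × ℝ × E) × E => q.2.1.1 • q.2.2 := by fun_prop
  exact (((contDiff_averagedFDeriv hf).comp (hcurve.prodMk hscaled)).clm_apply (by fun_prop)).add
    (hg.comp (contDiff_fst.prodMk ((hcurve.add hscaled).prodMk (by fun_prop))))

lemma smul_rescaledField [CompleteSpace E] (hf : ContDiff ℝ 1 f) (s ε θ : ℝ) (η v y : E) :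
    ε • rescaledField f g γ (s, (ε, θ, η), y) =
      perturbedField f g (s, (ε, v), γ (s + θ) + ε • y) - f (γ (s + θ)) := by
  rw [rescaledField, perturbedField, smul_add, ← map_smul, averagedFDeriv_apply_self hf]
  abel

lemma rescaledField_zero [CompleteSpace E] (s θ : ℝ) (η y : E) :
    rescaledField f g γ (s, (0, θ, η), y) =
      fderiv ℝ f (γ (s + θ)) y + g s (γ (s + θ)) 0 := by
  simp [rescaledField, averagedFDeriv_zero]

lemma fderiv_perturbedField_zero (hf : ContDiff ℝ 1 f)
    (hg : ContDiff ℝ 1 fun p : ℝ × E × ℝ => g p.1 p.2.1 p.2.2) (s e : ℝ) (v x h y : E) :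
    fderiv ℝ (perturbedField f g) (s, (0, v), x) (0, (e, h), y) =
      fderiv ℝ f x y + e • g s x 0 := by
  let q : ℝ × (ℝ × E) × E := (s, (0, v), x)
  have hf' : HasFDerivAt (fun q : ℝ × (ℝ × E) × E => f q.2.2)
      (fderiv ℝ f x ∘L .snd ℝ (ℝ × E) E ∘L .snd ℝ ℝ ((ℝ × E) × E)) q :=
    HasFDerivAt.comp q (hf.differentiable one_ne_zero x).hasFDerivAt
      (ContinuousLinearMap.hasFDerivAt (.snd ℝ (ℝ × E) E ∘L .snd ℝ ℝ ((ℝ × E) × E)))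
  have hε : HasFDerivAt (fun q : ℝ × (ℝ × E) × E => q.2.1.1)
      (.fst ℝ ℝ E ∘L .fst ℝ (ℝ × E) E ∘L .snd ℝ ℝ ((ℝ × E) × E)) q :=
    ContinuousLinearMap.hasFDerivAt (.fst ℝ ℝ E ∘L .fst ℝ (ℝ × E) E ∘L .snd ℝ ℝ ((ℝ × E) × E))
  have hg' : DifferentiableAt ℝ (fun q : ℝ × (ℝ × E) × E => g q.1 q.2.2 q.2.1.1) q :=
    (hg.comp (by fun_prop : ContDiff ℝ 1 fun q : ℝ × (ℝ × E) × E =>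
      (q.1, q.2.2, q.2.1.1))).differentiable one_ne_zero q
  have hderiv : fderiv ℝ (perturbedField f g) q = _ := (hf'.add (hε.smul hg'.hasFDerivAt)).fderiv
  simp [hderiv, q]

end Perturbation

section RescaledFlow

variable {E : Type*} [NormedAddCommGroup E] [NormedSpace ℝ E] {T : ℝ} {hT : 0 ≤ T}
  {f : E → E} {g : ℝ → E → ℝ → E} {X : ℝ × E → C(Icc 0 T, E)} {γ : ℝ → E}

/-- `X (ε, v)` is the solution on `[0, T]` of the perturbed equation starting at `v`. -/
def IsPerturbedFlow (hT : 0 ≤ T) (f : E → E) (g : ℝ → E → ℝ → E) (X : ℝ × E → C(Icc 0 T, E)) :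
    Prop :=
  ∀ p : ℝ × E, IsIntegralSolution hT (fun s x => perturbedField f g (s, p, x)) p.2 (X p)

variable [CompleteSpace E]

lemma IsPerturbedFlow.exists_hasStrictFDerivAt (hX : IsPerturbedFlow hT f g X)
    (hf : ContDiff ℝ 1 f) (hg : ContDiff ℝ 1 fun p : ℝ × E × ℝ => g p.1 p.2.1 p.2.2)
    (p : ℝ × E) : ∃ X' : ℝ × E →L[ℝ] C(Icc 0 T, E), HasStrictFDerivAt X X' p :=
  (hasStrictFDerivAt_of_isIntegralSolution (contDiff_perturbedField hf hg) (ι := .snd ℝ ℝ E)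
    hX p).imp fun _ hX' => hX'.1

lemma IsPerturbedFlow.apply_orbit (hX : IsPerturbedFlow hT f g X) (hf : ContDiff ℝ 1 f)
    (hg : ContDiff ℝ 1 fun p : ℝ × E × ℝ => g p.1 p.2.1 p.2.2)
    (hγ : ∀ t, HasDerivAt γ (f (γ t)) t) (θ : ℝ) (s : Icc 0 T) : X (0, γ θ) s = γ (s + θ) := by
  have hγ_cont : Continuous γ := continuous_iff_continuousAt.2 fun t => (hγ t).continuousAt
  have hw : ContDiff ℝ 1 fun q : ℝ × E => perturbedField f g (q.1, (0, γ θ), q.2) :=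
    (contDiff_perturbedField hf hg).comp (by fun_prop)
  let u : C(Icc 0 T, E) := ⟨fun s => γ (s + θ), by fun_prop⟩
  have hu : IsIntegralSolution hT (fun s x => perturbedField f g (s, (0, γ θ), x)) (γ θ) u := by
    rw [← zero_add θ]
    exact isIntegralSolution_of_hasDerivAt hT (x := fun s => γ (s + θ))
      (by simpa using hw.continuous)
      (fun t => by simpa [perturbedField] using (hγ (t + θ)).comp_add_const t θ) fun _ => rfl
  exact DFunLike.congr_fun ((hX (0, γ θ)).unique hw hu) s

lemma IsPerturbedFlow.isIntegralSolution_inv_smul_sub (hX : IsPerturbedFlow hT f g X)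
    (hf : ContDiff ℝ 1 f) (hg : ContDiff ℝ 1 fun p : ℝ × E × ℝ => g p.1 p.2.1 p.2.2)
    (hγ : ∀ t, HasDerivAt γ (f (γ t)) t) {ε : ℝ} (hε : ε ≠ 0) (θ : ℝ) (η : E) :
    IsIntegralSolution hT (fun s y => rescaledField f g γ (s, (ε, θ, η), y)) η
      (ε⁻¹ • (X (ε, γ θ + ε • η) - X (0, γ θ))) := by
  let field (p : ℝ × E) : C(Icc 0 T, E) := ⟨fun s => perturbedField f g (s, p, X p s),
    (contDiff_perturbedField hf hg).continuous.comp (by fun_prop)⟩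
  have hfield (p : ℝ × E) : X p = ContinuousLinearMap.const ℝ _ p.2 + primitive hT (field p) :=
    (isIntegralSolution_iff_eq_const_add_primitive fun _ => rfl).1 (hX p)
  let u := X (ε, γ θ + ε • η)
  let y := ε⁻¹ • (u - X (0, γ θ))
  have hu (s : Icc 0 T) : γ (s + θ) + ε • y s = u s := by
    simp [y, smul_inv_smul₀ hε, hX.apply_orbit hf hg hγ]
  refine (isIntegralSolution_iff_eq_const_add_primitive
    (h := ε⁻¹ • (field (ε, γ θ + ε • η) - field (0, γ θ))) fun s => ?_).2 ?_
  · refine (inv_smul_eq_iff₀ hε).2 ?_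
    change _ = ε • rescaledField f g γ (s, (ε, θ, η), y s)
    rw [smul_rescaledField (v := γ θ + ε • η) hf, hu]
    simp [field, perturbedField, u, hX.apply_orbit hf hg hγ]
  · refine (inv_smul_eq_iff₀ hε).2 ?_
    rw [hfield (ε, _), hfield (0, _)]
    simp only [map_add, map_sub, map_smul, smul_add, smul_inv_smul₀ hε]
    abel

lemma IsPerturbedFlow.exists_rescaledFlow (hX : IsPerturbedFlow hT f g X)
    (hf : ContDiff ℝ 1 f) (hg : ContDiff ℝ 1 fun p : ℝ × E × ℝ => g p.1 p.2.1 p.2.2)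
    (hγ : ∀ t, HasDerivAt γ (f (γ t)) t) : ∃ R : ℝ × ℝ × E → C(Icc 0 T, E),
      (∀ q, IsIntegralSolution hT (fun s y => rescaledField f g γ (s, q, y)) q.2.2 (R q)) ∧
      ∀ (ε θ : ℝ) (η : E), ε • R (ε, θ, η) = X (ε, γ θ + ε • η) - X (0, γ θ) := by
  suffices hpointwise : ∀ q : ℝ × ℝ × E, ∃ y : C(Icc 0 T, E),
      IsIntegralSolution hT (fun s y => rescaledField f g γ (s, q, y)) q.2.2 y ∧
      q.1 • y = X (q.1, γ q.2.1 + q.1 • q.2.2) - X (0, γ q.2.1) by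
    choose R hR using hpointwise
    exact ⟨R, fun q => (hR q).1, fun ε θ η => (hR (ε, θ, η)).2⟩
  rintro ⟨ε, θ, η⟩
  rcases eq_or_ne ε 0 with rfl | hε
  · obtain ⟨Y, -, hY⟩ :=
      hasStrictFDerivAt_of_isIntegralSolution (contDiff_perturbedField hf hg)
        (ι := .snd ℝ ℝ E) hX (0, γ θ)
    refine ⟨Y (1, η), fun t => ?_, by simp⟩
    refine (hY (1, η) t).trans (congrArg (η + ·) (intervalIntegral.integral_congr fun s hs => ?_))
    rw [uIcc_of_le t.2.1] at hs
    have hsT : s ∈ Icc 0 T := ⟨hs.1, hs.2.trans t.2.2⟩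
    simp [fderiv_perturbedField_zero hf hg, rescaledField_zero,
      iccExtend_of_mem hT (X (0, γ θ)) hsT, hX.apply_orbit hf hg hγ]
  · exact ⟨_, hX.isIntegralSolution_inv_smul_sub hf hg hγ hε θ η, smul_inv_smul₀ hε _⟩

end RescaledFlow

section PeriodMap

variable {E : Type*} [NormedAddCommGroup E] [InnerProductSpace ℝ E] [CompleteSpace E] {T : ℝ}
  {hT : 0 ≤ T} {f : E → E} {g : ℝ → E → ℝ → E} {X : ℝ × E → C(Icc 0 T, E)} {γ z : ℝ → E}

/-- The displacement `𝒫_ε(v) - v` of the period map at `(ε, v)`. -/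
def displacement (hT : 0 ≤ T) (X : ℝ × E → C(Icc 0 T, E)) (q : ℝ × E) : E :=
  X q ⟨T, right_mem_Icc.2 hT⟩ - q.2

/-- The Malkin bifurcation function of the orbit `γ` with adjoint solution `z`. -/
def malkin (T : ℝ) (g : ℝ → E → ℝ → E) (γ z : ℝ → E) (θ : ℝ) : ℝ :=
  ∫ t in 0..T, ⟪g t (γ (t + θ)) 0, z (t + θ)⟫_ℝ

lemma IsPerturbedFlow.exists_hasStrictFDerivAt_displacement (hX : IsPerturbedFlow hT f g X)
    (hf : ContDiff ℝ 1 f) (hg : ContDiff ℝ 1 fun p : ℝ × E × ℝ => g p.1 p.2.1 p.2.2) (v : E) :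
    ∃ F' : ℝ × E →L[ℝ] E, HasStrictFDerivAt (displacement hT X) F' (0, v) ∧
      ∀ h, F' (0, h) = fderiv ℝ (fun v => X (0, v) ⟨T, right_mem_Icc.2 hT⟩) v h - h := by
  obtain ⟨X', hX'⟩ := hX.exists_hasStrictFDerivAt hf hg (0, v)
  let eval : C(Icc 0 T, E) →L[ℝ] E := ContinuousMap.evalCLM ℝ ⟨T, right_mem_Icc.2 hT⟩
  have heval := eval.hasStrictFDerivAt.comp (0, v) hX'
  have hperiod : HasFDerivAt (fun v => X (0, v) ⟨T, right_mem_Icc.2 hT⟩)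
      ((eval ∘L X') ∘L .inr ℝ ℝ E) v :=
    heval.hasFDerivAt.comp v (hasFDerivAt_prodMk_right 0 v)
  exact ⟨_, heval.sub hasStrictFDerivAt_snd, fun h => by rw [hperiod.fderiv]; rfl⟩

lemma IsIntegralSolution.inner_rescaled_eq_malkin (hf : ContDiff ℝ 1 f)
    (hg : ContDiff ℝ 1 fun p : ℝ × E × ℝ => g p.1 p.2.1 p.2.2) (hγ : Continuous γ)
    (hz : ∀ t, HasDerivAt z (-(ContinuousLinearMap.adjoint (fderiv ℝ f (γ t)) (z t))) t)
    (hzT : Function.Periodic z T) {θ : ℝ} {η : E} {y : C(Icc 0 T, E)}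
    (hy : IsIntegralSolution hT (fun s y => rescaledField f g γ (s, (0, θ, η), y)) η y) :
    ⟪y ⟨T, right_mem_Icc.2 hT⟩ - η, z θ⟫_ℝ = malkin T g γ z θ := by
  simp only [rescaledField_zero] at hy
  have hpair := hy.inner_sub_inner_eq_integral
    (A := fun s => fderiv ℝ f (γ (s + θ))) (b := fun s => g s (γ (s + θ)) 0)
    ((hf.continuous_fderiv one_ne_zero).comp (by fun_prop))
    (hg.continuous.comp (by fun_prop : Continuous fun s : ℝ => (s, γ (s + θ), (0 : ℝ))))
    (fun t => (hz (t + θ)).comp_add_const t θ)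
  rwa [zero_add, add_comm T, hzT, ← inner_sub_left] at hpair

theorem IsPerturbedFlow.exists_isBlowUp_displacement (hX : IsPerturbedFlow hT f g X)
    (hf : ContDiff ℝ 2 f) (hg : ContDiff ℝ 1 fun p : ℝ × E × ℝ => g p.1 p.2.1 p.2.2)
    (hγ : ∀ t, HasDerivAt γ (f (γ t)) t) (hγT : Function.Periodic γ T)
    (hz : ∀ t, HasDerivAt z (-(ContinuousLinearMap.adjoint (fderiv ℝ f (γ t)) (z t))) t)
    (hzT : Function.Periodic z T) :
    ∃ G, IsBlowUp (displacement hT X) G γ z (malkin T g γ z) := by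
  have hf₁ : ContDiff ℝ 1 f := hf.of_le one_le_two
  have hγ_cont : Continuous γ := continuous_iff_continuousAt.2 fun t => (hγ t).continuousAt
  have hγ₁ : ContDiff ℝ 1 γ := contDiff_one_iff_deriv.2 ⟨fun t => (hγ t).differentiableAt, by
    rw [funext fun t => (hγ t).deriv]
    exact hf.continuous.comp hγ_cont⟩
  obtain ⟨R, hR, hRX⟩ := hX.exists_rescaledFlow hf₁ hg hγ
  refine ⟨fun q => R q ⟨T, right_mem_Icc.2 hT⟩ - q.2.2, fun q => ?_, fun ε θ η => ?_,
    fun θ η => (hR (0, θ, η)).inner_rescaled_eq_malkin hf₁ hg hγ_cont hz hzT⟩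
  · obtain ⟨R', hR', -⟩ := hasStrictFDerivAt_of_isIntegralSolution
      (contDiff_rescaledField hf hg hγ₁) (ι := .snd ℝ ℝ E ∘L .snd ℝ ℝ (ℝ × E)) hR q
    let eval : C(Icc 0 T, E) →L[ℝ] E := ContinuousMap.evalCLM ℝ ⟨T, right_mem_Icc.2 hT⟩
    exact ⟨_, (eval.hasStrictFDerivAt.comp q hR').sub
      (ContinuousLinearMap.hasStrictFDerivAt (.snd ℝ ℝ E ∘L .snd ℝ ℝ (ℝ × E)))⟩
  · have hend := DFunLike.congr_fun (hRX ε θ η) ⟨T, right_mem_Icc.2 hT⟩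
    simp only [ContinuousMap.smul_apply, ContinuousMap.sub_apply, hX.apply_orbit hf₁ hg hγ,
      add_comm T, hγT θ] at hend
    rw [smul_sub, hend, displacement, sub_sub]

theorem IsPerturbedFlow.exists_unique_displacement_eq_zero [FiniteDimensional ℝ E]
    (hX : IsPerturbedFlow hT f g X) (hf : ContDiff ℝ 2 f)
    (hg : ContDiff ℝ 1 fun p : ℝ × E × ℝ => g p.1 p.2.1 p.2.2)
    (hγ : ∀ t, HasDerivAt γ (f (γ t)) t) (hγT : Function.Periodic γ T)
    (hz : ∀ t, HasDerivAt z (-(ContinuousLinearMap.adjoint (fderiv ℝ f (γ t)) (z t))) t)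
    (hzT : Function.Periodic z T) {θ₀ m : ℝ} (hpz : ⟪f (γ θ₀), z θ₀⟫_ℝ ≠ 0)
    (hsimple : Module.finrank ℝ (Module.End.eigenspace
      (fderiv ℝ (fun v => X (0, v) ⟨T, right_mem_Icc.2 hT⟩) (γ θ₀)).toLinearMap 1) ≤ 1)
    (hM₀ : malkin T g γ z θ₀ = 0) (hM : HasDerivAt (malkin T g γ z) m θ₀) (hm : m ≠ 0) :
    ∃ v : ℝ → E, Tendsto v (𝓝 0) (𝓝 (γ θ₀)) ∧
      ∀ᶠ q in 𝓝[>] 0 ×ˢ 𝓝 (γ θ₀), displacement hT X q = 0 ↔ q.2 = v q.1 := by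
  obtain ⟨G, hG⟩ := hX.exists_isBlowUp_displacement hf hg hγ hγT hz hzT
  obtain ⟨F', hF, hF'⟩ :=
    hX.exists_hasStrictFDerivAt_displacement (hf.of_le one_le_two) hg (γ θ₀)
  have hγ_strict : HasStrictDerivAt γ (f (γ θ₀)) θ₀ :=
    hasStrictDerivAt_of_hasDerivAt_of_continuousAt (.of_forall hγ)
      (hf.continuous.continuousAt.comp (hγ θ₀).continuousAt)
  have htangent : F' (0, f (γ θ₀)) = 0 := by
    have hcurve := hF.hasFDerivAt.comp_hasDerivAt θ₀ ((hasDerivAt_const θ₀ (0 : ℝ)).prodMk (hγ θ₀))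
    exact hcurve.unique
      ((hasDerivAt_const θ₀ (0 : E)).congr_of_eventuallyEq (.of_forall hG.apply_curve))
  have heigen {h : E} (hh : F' (0, h) = 0) : h ∈ Module.End.eigenspace
      (fderiv ℝ (fun v => X (0, v) ⟨T, right_mem_Icc.2 hT⟩) (γ θ₀)).toLinearMap 1 := by
    rw [hF', sub_eq_zero] at hh
    rw [Module.End.mem_eigenspace_iff, one_smul]
    exact hh
  have hp₀ : f (γ θ₀) ≠ 0 := fun hp => hpz (by rw [hp, inner_zero_left])
  exact hG.exists_unique_zero hF hγ_strict
    (fun h hh => mem_span_singleton_of_finrank_le_one hsimple (heigen htangent) hp₀ (heigen hh))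
    hpz (hz θ₀).differentiableAt hM₀ hM hm

end PeriodMap

section PeriodicSolutions

variable {E : Type*} [NormedAddCommGroup E] [NormedSpace ℝ E] {T : ℝ}

lemma exists_isPerturbedFlow [CompleteSpace E] (hT : 0 ≤ T) {f : E → E} {g : ℝ → E → ℝ → E}
    (hf : ContDiff ℝ 1 f)
    (hg : ContDiff ℝ 1 fun p : ℝ × E × ℝ => g p.1 p.2.1 p.2.2) {X : ℝ → E → ℝ → E}
    (hX0 : ∀ v ε, X 0 v ε = v)
    (hXode : ∀ v ε t, HasDerivAt (fun s => X s v ε) (f (X t v ε) + ε • g t (X t v ε) ε) t) :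
    ∃ Φ : ℝ × E → C(Icc 0 T, E), IsPerturbedFlow hT f g Φ ∧
      ∀ ε v s, Φ (ε, v) s = X s v ε := by
  have hcont (p : ℝ × E) : Continuous fun s => X s p.2 p.1 :=
    continuous_iff_continuousAt.2 fun t => (hXode p.2 p.1 t).continuousAt
  refine ⟨fun p => ⟨fun s => X s p.2 p.1, (hcont p).comp continuous_subtype_val⟩, fun p => ?_,
    fun _ _ _ => rfl⟩
  have hfield : Continuous fun q : ℝ × E => perturbedField f g (q.1, p, q.2) :=
    (contDiff_perturbedField hf hg).continuous.comp (by fun_prop)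
  rw [← hX0 p.2 p.1]
  exact isIntegralSolution_of_hasDerivAt (w := fun s x => perturbedField f g (s, p, x))
    (x := fun s => X s p.2 p.1) hT hfield (hXode p.2 p.1) fun _ => rfl

lemma IsPerturbedFlow.tendstoUniformlyOn [CompleteSpace E] {hT : 0 ≤ T} {f : E → E}
    {g : ℝ → E → ℝ → E} (hf : ContDiff ℝ 1 f)
    (hg : ContDiff ℝ 1 fun p : ℝ × E × ℝ => g p.1 p.2.1 p.2.2) {Φ : ℝ × E → C(Icc 0 T, E)}
    (hΦ : IsPerturbedFlow hT f g Φ) {v : ℝ → E} {a : E} (hv : Tendsto v (𝓝 0) (𝓝 a))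
    {x : ℝ → ℝ → E} (hx : ∀ ε s, Φ (ε, v ε) s = x ε s) {y : ℝ → E} (hy : ∀ s, Φ (0, a) s = y s) :
    TendstoUniformlyOn x y (𝓝 0) (Icc 0 T) := by
  obtain ⟨_, hΦ'⟩ := hΦ.exists_hasStrictFDerivAt hf hg (0, a)
  have hconv : Tendsto (fun ε => Φ (ε, v ε)) (𝓝 0) (𝓝 (Φ (0, a))) :=
    hΦ'.continuousAt.tendsto.comp (tendsto_id.prodMk_nhds hv)
  rw [tendstoUniformlyOn_iff_tendstoUniformly_comp_coe]
  convert ContinuousMap.tendsto_iff_tendstoUniformly.1 hconv using 1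
  · exact funext fun ε => funext fun s => (hx ε s).symm
  · exact funext fun s => (hy s).symm

variable {w : ℝ → ℝ → E → E} {X : ℝ → E → ℝ → E}

lemma periodic_of_apply_eq (hwT : ∀ ε t x, w ε (t + T) x = w ε t x)
    (hXode : ∀ v ε t, HasDerivAt (fun s => X s v ε) (w ε t (X t v ε)) t)
    (hXuniq : ∀ v ε (u : ℝ → E), u 0 = v → (∀ t, HasDerivAt u (w ε t (u t)) t) →
      ∀ t, u t = X t v ε) {v : E} {ε : ℝ}
    (hfixed : X T v ε = v) : Function.Periodic (fun t => X t v ε) T := by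
  refine hXuniq v ε (fun t => X (t + T) v ε) (by simpa using hfixed) fun t => ?_
  rw [← hwT]
  exact (hXode v ε (t + T)).comp_add_const t T

theorem exists_forall_Ioc_unique_periodic (hT : 0 ≤ T)
    (hwT : ∀ ε t x, w ε (t + T) x = w ε t x) (hX0 : ∀ v ε, X 0 v ε = v)
    (hXode : ∀ v ε t, HasDerivAt (fun s => X s v ε) (w ε t (X t v ε)) t)
    (hXuniq : ∀ v ε (u : ℝ → E), u 0 = v → (∀ t, HasDerivAt u (w ε t (u t)) t) →
      ∀ t, u t = X t v ε)
    {v : ℝ → E} {y : ℝ → E} {δ : ℝ} (hδ : 0 < δ)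
    (hfixed : ∀ᶠ ε in 𝓝[>] 0, ∀ a ∈ Metric.closedBall (y 0) δ, X T a ε = a ↔ a = v ε)
    (hunif : TendstoUniformlyOn (fun ε t => X t (v ε) ε) y (𝓝[>] 0) (Icc 0 T)) :
    ∃ ε₀ > 0, ∀ ε ∈ Ioc 0 ε₀,
      ((∀ t, HasDerivAt (fun t => X t (v ε) ε) (w ε t (X t (v ε) ε)) t) ∧
        (∀ t, X (t + T) (v ε) ε = X t (v ε) ε)) ∧
      (∀ t ∈ Icc 0 T, ‖X t (v ε) ε - y t‖ ≤ δ) ∧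
      (∀ u : ℝ → E, (∀ t, HasDerivAt u (w ε t (u t)) t) → (∀ t, u (t + T) = u t) →
        (∀ t ∈ Icc 0 T, ‖u t - y t‖ ≤ δ) → u = fun t => X t (v ε) ε) := by
  obtain ⟨ε₀, hε₀, hsub⟩ := (mem_nhdsGT_iff_exists_Ioc_subset (a := (0 : ℝ))).1
    (hfixed.and (Metric.tendstoUniformlyOn_iff.1 hunif δ hδ))
  refine ⟨ε₀, hε₀, fun ε hε => ?_⟩
  obtain ⟨hfixed, hclose⟩ := hsub hε
  replace hclose (t : ℝ) (ht : t ∈ Icc 0 T) : ‖X t (v ε) ε - y t‖ ≤ δ := by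
    rw [← dist_eq_norm, dist_comm]
    exact (hclose t ht).le
  have h0 : (0 : ℝ) ∈ Icc 0 T := left_mem_Icc.2 hT
  have hvT : X T (v ε) ε = v ε := (hfixed (v ε) (by
    simpa [hX0, dist_eq_norm] using hclose 0 h0)).2 rfl
  refine ⟨⟨hXode (v ε) ε, periodic_of_apply_eq hwT hXode hXuniq hvT⟩, hclose,
    fun u hu huT huy => ?_⟩
  have huX : ∀ t, u t = X t (u 0) ε := hXuniq (u 0) ε u rfl hu
  have hu0 : u 0 = v ε := (hfixed (u 0) (mem_closedBall_iff_norm.2 (huy 0 h0))).1 <| by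
    rw [← huX]
    simpa using huT 0
  exact funext fun t => hu0 ▸ huX t

end PeriodicSolutions

section Multiplicity

lemma rootMultiplicity_add_card_filter_roots_map_le {A B : Type*} [CommRing A] [CommRing B]
    [IsDomain B] (p : Polynomial A) {φ : A →+* B} (hφ : Function.Injective φ) {a : A}
    {Q : B → Prop} [DecidablePred Q] (hQ : ¬ Q (φ a)) :
    p.rootMultiplicity a + ((p.map φ).roots.filter Q).card ≤ p.natDegree := by
  classical
  calc p.rootMultiplicity a + ((p.map φ).roots.filter Q).card
      = ((p.map φ).roots.filter (¬ Q ·)).count (φ a) + ((p.map φ).roots.filter Q).card := by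
        rw [Multiset.count_filter_of_pos (p := (¬ Q ·)) hQ, Polynomial.count_roots,
          Polynomial.eq_rootMultiplicity_map hφ]
    _ ≤ ((p.map φ).roots.filter (¬ Q ·)).card + ((p.map φ).roots.filter Q).card := by
        gcongr
        exact Multiset.count_le_card _ _
    _ = (p.map φ).roots.card := by
        rw [add_comm, ← Multiset.card_add, Multiset.filter_add_not]
    _ ≤ (p.map φ).natDegree := Polynomial.card_roots' _
    _ ≤ p.natDegree := Polynomial.natDegree_map_le

lemma finrank_eigenspace_add_card_filter_roots_map_charpoly_le {K L V : Type*} [Field K] [Field L]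
    [AddCommGroup V] [Module K V] [FiniteDimensional K V] (A : Module.End K V) (φ : K →+* L) {μ : K}
    {Q : L → Prop} [DecidablePred Q] (hQ : ¬ Q (φ μ)) :
    Module.finrank K (A.eigenspace μ) + ((A.charpoly.map φ).roots.filter Q).card ≤
      Module.finrank K V := by
  rw [← A.charpoly_natDegree]
  exact (Nat.add_le_add_right (A.finrank_eigenspace_le μ) _).trans
    (rootMultiplicity_add_card_filter_roots_map_le _ φ.injective hQ)

lemma charpoly_inner_sub_one {ι V : Type*} [Fintype ι] [DecidableEq ι]
    [NormedAddCommGroup V] [InnerProductSpace ℝ V] [FiniteDimensional ℝ V]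
    (b : OrthonormalBasis ι ℝ V) (A : Module.End ℝ V) :
    Matrix.charpoly (fun i j => ⟪A (b j), b i⟫_ℝ - if i = j then 1 else 0) = (A - 1).charpoly := by
  rw [← LinearMap.charpoly_toMatrix (A - 1) b.toBasis]
  congr 1
  ext i j
  simp [LinearMap.toMatrix_apply, b.repr_apply_apply, real_inner_comm]

lemma finrank_eigenspace_one_le_one {V : Type*} [AddCommGroup V] [Module ℝ V]
    [FiniteDimensional ℝ V] (A : Module.End ℝ V)
    (hA : Module.finrank ℝ V - 1 ≤
      (((A - 1).charpoly.map (algebraMap ℝ ℂ)).roots.filter fun μ => μ.re < 0).card) :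
    Module.finrank ℝ (A.eigenspace 1) ≤ 1 := by
  have hcount := finrank_eigenspace_add_card_filter_roots_map_charpoly_le (A - 1) (algebraMap ℝ ℂ)
    (μ := 0) (Q := fun μ => μ.re < 0) (by simp)
  have heigen : (A - 1).eigenspace 0 = A.eigenspace 1 := by
    ext v
    simp [sub_eq_zero]
  rw [heigen] at hcount
  omega

end Multiplicity

end

end Malkin

open Malkin in
theorem stmt_13_general {E : Type*} [NormedAddCommGroup E] [InnerProductSpace ℝ E]
    [FiniteDimensional ℝ E] (T : ℝ) (hT : 0 ≤ T) (f : E → E) (hf : ContDiff ℝ 2 f)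
    (g : ℝ → E → ℝ → E) (hg : ContDiff ℝ 1 fun p : ℝ × E × ℝ => g p.1 p.2.1 p.2.2)
    (hgT : ∀ t x e, g (t + T) x e = g t x e)
    (X : ℝ → E → ℝ → E) (hX0 : ∀ v ε, X 0 v ε = v)
    (hXode : ∀ v ε t, HasDerivAt (fun s => X s v ε) (f (X t v ε) + ε • g t (X t v ε) ε) t)
    (hXuniq : ∀ v ε (u : ℝ → E), u 0 = v →
      (∀ t, HasDerivAt u (f (u t) + ε • g t (u t) ε) t) → ∀ t, u t = X t v ε)
    (x₀ : ℝ → E) (hx₀ : ∀ t, HasDerivAt x₀ (f (x₀ t)) t) (hx₀T : ∀ t, x₀ (t + T) = x₀ t)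
    (z₀ : ℝ → E)
    (hz₀ : ∀ t, HasDerivAt z₀ (-(ContinuousLinearMap.adjoint (fderiv ℝ f (x₀ t)) (z₀ t))) t)
    (hz₀T : ∀ t, z₀ (t + T) = z₀ t) (θ₀ : ℝ) (hnorm : ⟪f (x₀ θ₀), z₀ θ₀⟫_ℝ ≠ 0)
    (hsimple : Module.finrank ℝ
      (Module.End.eigenspace (fderiv ℝ (fun v => X T v 0) (x₀ θ₀)).toLinearMap 1) ≤ 1)
    (hM0 : (∫ t in 0..T, ⟪g t (x₀ (t + θ₀)) 0, z₀ (t + θ₀)⟫_ℝ) = 0) (m : ℝ) (hm : m ≠ 0)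
    (hM' : HasDerivAt (fun θ => ∫ t in 0..T, ⟪g t (x₀ (t + θ)) 0, z₀ (t + θ)⟫_ℝ) m θ₀) :
    ∃ ε₀ > (0 : ℝ), ∃ δ > (0 : ℝ), ∃ sol : ℝ → ℝ → E,
      (∀ ε ∈ Ioc 0 ε₀,
        ((∀ t, HasDerivAt (sol ε) (f (sol ε t) + ε • g t (sol ε t) ε) t) ∧
          (∀ t, sol ε (t + T) = sol ε t)) ∧
        (∀ t ∈ Icc 0 T, ‖sol ε t - x₀ (t + θ₀)‖ ≤ δ) ∧
        (∀ u : ℝ → E, (∀ t, HasDerivAt u (f (u t) + ε • g t (u t) ε) t) →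
          (∀ t, u (t + T) = u t) →
          (∀ t ∈ Icc 0 T, ‖u t - x₀ (t + θ₀)‖ ≤ δ) → u = sol ε)) ∧
      TendstoUniformlyOn (fun ε t => sol ε t) (fun t => x₀ (t + θ₀)) (𝓝[>] 0) (Icc 0 T) := by
  have hf₁ : ContDiff ℝ 1 f := hf.of_le one_le_two
  obtain ⟨Φ, hΦ, hΦX⟩ := exists_isPerturbedFlow hT hf₁ hg hX0 hXode
  have hperiod : (fun v => Φ (0, v) ⟨T, right_mem_Icc.2 hT⟩) = fun v => X T v 0 :=
    funext fun v => hΦX 0 v _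
  obtain ⟨v, hv, hzero⟩ := hΦ.exists_unique_displacement_eq_zero hf hg hx₀ hx₀T hz₀ hz₀T hnorm
    (by rwa [hperiod]) hM0 hM' hm
  obtain ⟨δ, hδ, hfixed⟩ : ∃ δ > 0, ∀ᶠ ε in 𝓝[>] 0, ∀ a ∈ Metric.closedBall (x₀ (0 + θ₀)) δ,
      X T a ε = a ↔ a = v ε := by
    obtain ⟨P, hP, Q, hQ, hPQ⟩ := eventually_prod_iff.1 hzero
    obtain ⟨δ, hδ, hδQ⟩ := Metric.nhds_basis_closedBall.eventually_iff.1 hQ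
    refine ⟨δ, hδ, hP.mono fun ε hε a ha => ?_⟩
    rw [zero_add] at ha
    simpa only [displacement, hΦX, sub_eq_zero] using hPQ hε (hδQ ha)
  have hunif : TendstoUniformlyOn (fun ε t => X t (v ε) ε) (fun t => x₀ (t + θ₀)) (𝓝[>] 0)
      (Icc 0 T) := fun U hU => nhdsWithin_le_nhds <|
    hΦ.tendstoUniformlyOn hf₁ hg hv (fun ε s => hΦX ε (v ε) s) (hΦ.apply_orbit hf₁ hg hx₀ θ₀) U hU
  obtain ⟨ε₀, hε₀, hsol⟩ := exists_forall_Ioc_unique_periodic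
    (w := fun ε t x => f x + ε • g t x ε) hT (fun ε t x => by simp only [hgT]) hX0 hXode hXuniq hδ
    hfixed hunif
  exact ⟨ε₀, hε₀, δ, hδ, fun ε t => X t (v ε) ε, hsol, hunif⟩

/-- Theorem 3, existence and uniqueness: if `(𝒫₀)'(x₀(θ₀)) − I` has `n−1`
eigenvalues with negative real parts, `M(θ₀) = 0` and `M'(θ₀) < 0`, then for all small
`ε > 0` the perturbed system has a unique `T`-periodic solution `x_ε` near `x₀(·+θ₀)`,
and `x_ε → x₀(·+θ₀)` uniformly on `[0,T]` as `ε → 0⁺`. -/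
theorem stmt_13 {n : ℕ} (T : ℝ) (hT : 0 < T)
    (f : EuclideanSpace ℝ (Fin n) → EuclideanSpace ℝ (Fin n))
    (hf : ContDiff ℝ 2 f)
    (g : ℝ → EuclideanSpace ℝ (Fin n) → ℝ → EuclideanSpace ℝ (Fin n))
    (hg : ContDiff ℝ 1 fun p : ℝ × EuclideanSpace ℝ (Fin n) × ℝ => g p.1 p.2.1 p.2.2)
    (hgT : ∀ t x e, g (t + T) x e = g t x e)
    (X : ℝ → EuclideanSpace ℝ (Fin n) → ℝ → EuclideanSpace ℝ (Fin n))
    (hX0 : ∀ v ε, X 0 v ε = v)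
    (hXode : ∀ v ε t, HasDerivAt (fun s => X s v ε)
      (f (X t v ε) + ε • g t (X t v ε) ε) t)
    (hXuniq : ∀ v ε (u : ℝ → EuclideanSpace ℝ (Fin n)), u 0 = v →
      (∀ t, HasDerivAt u (f (u t) + ε • g t (u t) ε) t) → ∀ t, u t = X t v ε)
    (x₀ : ℝ → EuclideanSpace ℝ (Fin n))
    (hx₀ : ∀ t, HasDerivAt x₀ (f (x₀ t)) t)
    (hx₀T : ∀ t, x₀ (t + T) = x₀ t)
    (z₀ : ℝ → EuclideanSpace ℝ (Fin n))
    (hz₀ : ∀ t, HasDerivAt z₀ (-(ContinuousLinearMap.adjoint (fderiv ℝ f (x₀ t)) (z₀ t))) t)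
    (hz₀T : ∀ t, z₀ (t + T) = z₀ t)
    (hnorm : ∀ t, ⟪deriv x₀ t, z₀ t⟫_ℝ = 1)
    (θ₀ : ℝ) (hθ₀ : θ₀ ∈ Icc (0:ℝ) T)
    -- `(𝒫₀)'(x₀(θ₀)) − I` has `n−1` eigenvalues with negative real parts
    (heig : Multiset.card
      (((Matrix.charpoly (fun i j : Fin n =>
          ⟪fderiv ℝ (fun v => X T v 0) (x₀ θ₀) (EuclideanSpace.single j 1),
            EuclideanSpace.single i 1⟫_ℝ - if i = j then (1:ℝ) else 0)).map
        (algebraMap ℝ ℂ)).roots.filter fun μ : ℂ => μ.re < 0) = n - 1)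
    -- `M(θ₀) = 0`
    (hM0 : (∫ t in (0:ℝ)..T, ⟪g t (x₀ (t + θ₀)) 0, z₀ (t + θ₀)⟫_ℝ) = 0)
    -- `M'(θ₀) < 0`
    (m : ℝ) (hm : m < 0)
    (hM' : HasDerivAt (fun θ => ∫ t in (0:ℝ)..T, ⟪g t (x₀ (t + θ)) 0, z₀ (t + θ)⟫_ℝ) m θ₀) :
    ∃ ε₀ > (0:ℝ), ∃ δ > (0:ℝ), ∃ sol : ℝ → ℝ → EuclideanSpace ℝ (Fin n),
      (∀ ε ∈ Ioc (0:ℝ) ε₀,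
        ((∀ t, HasDerivAt (sol ε) (f (sol ε t) + ε • g t (sol ε t) ε) t) ∧
          (∀ t, sol ε (t + T) = sol ε t)) ∧
        (∀ t ∈ Icc (0:ℝ) T, ‖sol ε t - x₀ (t + θ₀)‖ ≤ δ) ∧
        (∀ u : ℝ → EuclideanSpace ℝ (Fin n),
          (∀ t, HasDerivAt u (f (u t) + ε • g t (u t) ε) t) →
          (∀ t, u (t + T) = u t) →
          (∀ t ∈ Icc (0:ℝ) T, ‖u t - x₀ (t + θ₀)‖ ≤ δ) → u = sol ε)) ∧
      TendstoUniformlyOn (fun ε t => sol ε t) (fun t => x₀ (t + θ₀))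
        (𝓝[>] (0:ℝ)) (Icc (0:ℝ) T) := by
  refine stmt_13_general T hT.le f hf g hg hgT X hX0 hXode hXuniq x₀ hx₀ hx₀T z₀ hz₀ hz₀T θ₀
    (by simp [← (hx₀ θ₀).deriv, hnorm]) (Malkin.finrank_eigenspace_one_le_one _ ?_) hM0 m hm.ne hM'
  rw [← Malkin.charpoly_inner_sub_one (EuclideanSpace.basisFun (Fin n) ℝ)]
  simpa using heig.ge
end

section
/- Consider ẋ = f(x) + εg(t,x,ε) with f ∈ C²(ℝⁿ,ℝⁿ), g ∈ C¹(ℝ×ℝⁿ×[0,1],ℝⁿ) T-periodic in t, unique solutions of Cauchy problems defined on [0,T], Poincaré map 𝒫_ε(v) = x(T,v,ε), P(v) = 𝒫₀(v) − v, Q(v,ε) = (𝒫_ε(v) − 𝒫₀(v))/ε for ε > 0 and Q(v,0) its limit as ε → 0⁺. Let x₀ be a T-periodic limit cycle of ẋ = f(x), z₀ a T-periodic solution of ż = −(f'(x₀(t)))*z with ⟨ẋ₀(t), z₀(t)⟩ ≡ 1, M the Malkin bifurcation function M(θ) = ∫₀ᵀ ⟨g(t,x₀(t+θ),0), z₀(t+θ)⟩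 dt, and for each θ let Π_θ ξ = ⟨ξ, z₀(θ)⟩ ẋ₀(θ). Then for every θ ∈ [0,T], Π_θ Q(x₀(θ),0) = M(θ) ẋ₀(θ); in particular Π_θ Q(x₀(θ),0) = 0 if and only if M(θ) = 0 (at points where ẋ₀(θ) ≠ 0). -/
open Set Filter Topology
open scoped InnerProductSpace

/-!
Along the solutions `u ε` of `u' = f u + ε • g t u ε` with `u ε 0 = y 0`, the difference quotients
`v ε = ε⁻¹ • (u ε - y)` solve, up to an error vanishing uniformly as `ε → 0⁺`, the variational
equation `v' = A t v + g t (y t) 0` with `A t = f'(y t)`; a Grönwall estimate supplies the bound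
`u ε - y = O(ε)` that makes the error vanish. Pairing with a solution of the adjoint equation
`z' = -A* z` cancels `A`: `⟪v ε, z⟫' → ⟪g t (y t) 0, z⟫` uniformly, and integrating this yields
`⟪v ε T, z T⟫ → ∫ ⟪g t (y t) 0, z⟫`. For `y t = x₀ (t + θ)` and `z t = z₀ (t + θ)` the left-hand
side tends to `⟪Q(x₀ θ, 0), z₀ θ⟫`, by periodicity of `z₀`.
-/

section Compactness

theorem exists_forall_dist_lt_of_isCompact {α β : Type*} [PseudoMetricSpace α]
    [PseudoMetricSpace β] {h : α → β} {K : Set α} (hK : IsCompact K)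
    (hh : ∀ p ∈ K, ContinuousAt h p) {η : ℝ} (hη : 0 < η) :
    ∃ δ > 0, ∀ p ∈ K, ∀ q, dist p q < δ → dist (h p) (h q) < η := by
  obtain ⟨δ, hδ, hKδ⟩ := Metric.mem_uniformity_dist.1
    (hK.uniformContinuousAt_of_continuousAt h hh (Metric.dist_mem_uniformity hη))
  exact ⟨δ, hδ, fun p hp q hpq => hKδ hpq hp⟩

theorem exists_forall_norm_lt_of_isCompact {α F : Type*} [PseudoMetricSpace α]
    [SeminormedAddCommGroup F] {h : α → F} {K : Set α} (hK : IsCompact K)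
    (hh : ∀ p ∈ K, ContinuousAt h p) :
    ∃ C > 0, ∃ δ > 0, ∀ p ∈ K, ∀ q, dist p q < δ → ‖h q‖ < C := by
  obtain ⟨C, hC⟩ := hK.exists_bound_of_continuousOn fun p hp => (hh p hp).continuousWithinAt
  obtain ⟨δ, hδ, hKδ⟩ := exists_forall_dist_lt_of_isCompact hK hh one_pos
  refine ⟨max C 0 + 1, by positivity, δ, hδ, fun p hp q hpq => ?_⟩
  have hpq' := hKδ p hp q hpq
  rw [dist_comm, dist_eq_norm] at hpq'
  linarith [norm_le_norm_add_norm_sub' (h q) (h p), hC p hp, le_max_left C 0]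

variable {E F : Type*} [NormedAddCommGroup E] [NormedSpace ℝ E]
  [NormedAddCommGroup F] [NormedSpace ℝ F] {f : E → F} {K : Set E}

theorem exists_forall_norm_sub_le_of_isCompact (hf : ContDiff ℝ 1 f) (hK : IsCompact K) :
    ∃ L > 0, ∃ δ > 0, ∀ p ∈ K, ∀ q, ‖q - p‖ < δ → ‖f q - f p‖ ≤ L * ‖q - p‖ := by
  obtain ⟨L, hL, δ, hδ, hKδ⟩ := exists_forall_norm_lt_of_isCompact hK
    fun p _ => (hf.continuous_fderiv one_ne_zero).continuousAt
  refine ⟨L, hL, δ, hδ, fun p hp q hpq => ?_⟩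
  exact (convex_ball p δ).norm_image_sub_le_of_norm_fderiv_le
    (fun x _ => hf.differentiable one_ne_zero x)
    (fun x hx => (hKδ p hp x (Metric.mem_ball'.1 hx)).le)
    (Metric.mem_ball_self hδ) (mem_ball_iff_norm.2 hpq)

theorem exists_forall_norm_sub_sub_fderiv_le_of_isCompact (hf : ContDiff ℝ 1 f)
    (hK : IsCompact K) {η : ℝ} (hη : 0 < η) :
    ∃ δ > 0, ∀ p ∈ K, ∀ q, ‖q - p‖ < δ →
      ‖f q - f p - fderiv ℝ f p (q - p)‖ ≤ η * ‖q - p‖ := by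
  obtain ⟨δ, hδ, hKδ⟩ := exists_forall_dist_lt_of_isCompact hK
    (fun p _ => (hf.continuous_fderiv one_ne_zero).continuousAt) hη
  refine ⟨δ, hδ, fun p hp q hpq => ?_⟩
  refine (convex_ball p δ).norm_image_sub_le_of_norm_fderiv_le'
    (fun x _ => hf.differentiable one_ne_zero x) (fun x hx => ?_)
    (Metric.mem_ball_self hδ) (mem_ball_iff_norm.2 hpq)
  rw [← dist_eq_norm, dist_comm]
  exact (hKδ p hp x (Metric.mem_ball'.1 hx)).le

end Compactness

section Gronwall

theorem gronwallBound_zero_mul (K ε c x : ℝ) :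
    gronwallBound 0 K (ε * c) x = ε * gronwallBound 0 K c x := by
  unfold gronwallBound
  split_ifs <;> ring

variable {E : Type*} [NormedAddCommGroup E] [NormedSpace ℝ E] {a b : ℝ}

-- The fencing theorem invokes `bound` only at times when `‖v t‖` equals the Grönwall bound, which
-- is still below `r`; hence no a priori estimate on `v` is required.
theorem norm_le_gronwallBound_of_norm_deriv_lt_of_norm_lt {v v' : ℝ → E} {δ K c r : ℝ}
    (hK : 0 ≤ K) (hc : 0 ≤ c) (hv : ∀ t ∈ Icc a b, HasDerivWithinAt v (v' t) (Icc a b) t)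
    (ha : ‖v a‖ ≤ δ) (hr : gronwallBound δ K c (b - a) < r)
    (bound : ∀ t ∈ Ico a b, ‖v t‖ < r → ‖v' t‖ < K * ‖v t‖ + c) :
    ∀ t ∈ Icc a b, ‖v t‖ ≤ gronwallBound δ K c (t - a) := by
  have hδ : 0 ≤ δ := (norm_nonneg _).trans ha
  refine fun t ht => image_norm_le_of_norm_deriv_right_lt_deriv_boundary
    (B := fun t => gronwallBound δ K c (t - a)) (fun s hs => (hv s hs).continuousWithinAt)
    (fun s hs => (hv s (Ico_subset_Icc_self hs)).mono_of_mem_nhdsWithin (Icc_mem_nhdsGE_of_mem hs))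
    (by simpa only [sub_self, gronwallBound_x0] using ha)
    (fun s => hasDerivAt_gronwallBound_shift δ K c s a) (fun s hs hvs => ?_) ht
  have hsr : ‖v s‖ < r := calc
    ‖v s‖ = gronwallBound δ K c (s - a) := hvs
    _ ≤ gronwallBound δ K c (b - a) := gronwallBound_mono hδ hc hK (by linarith [hs.2])
    _ < r := hr
  simpa only [hvs] using bound s hs hsr

theorem eqOn_Icc_of_isIntegralCurveOn_of_contDiff {f : E → E} (hf : ContDiff ℝ 1 f)
    {γ₁ γ₂ : ℝ → E} (h₁ : IsIntegralCurveOn γ₁ (fun _ => f) (Icc a b))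
    (h₂ : IsIntegralCurveOn γ₂ (fun _ => f) (Icc a b)) (ha : γ₁ a = γ₂ a) :
    EqOn γ₁ γ₂ (Icc a b) := by
  obtain ⟨L, hL⟩ := (hf.locallyLipschitz.locallyLipschitzOn
    (s := γ₁ '' Icc a b ∪ γ₂ '' Icc a b)).exists_lipschitzOnWith_of_compact
    ((isCompact_Icc.image_of_continuousOn h₁.continuousOn).union
      (isCompact_Icc.image_of_continuousOn h₂.continuousOn))
  have right_deriv {γ : ℝ → E} (h : IsIntegralCurveOn γ (fun _ => f) (Icc a b)) :
      ∀ t ∈ Ico a b, HasDerivWithinAt γ (f (γ t)) (Ici t) t := fun t ht =>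
    (h t (Ico_subset_Icc_self ht)).mono_of_mem_nhdsWithin (Icc_mem_nhdsGE_of_mem ht)
  exact ODE_solution_unique_of_mem_Icc_right (fun _ _ => hL)
    h₁.continuousOn (right_deriv h₁)
    (fun t ht => .inl (mem_image_of_mem γ₁ (Ico_subset_Icc_self ht)))
    h₂.continuousOn (right_deriv h₂)
    (fun t ht => .inr (mem_image_of_mem γ₂ (Ico_subset_Icc_self ht))) ha

end Gronwall

section Perturbation

variable {E : Type*} [NormedAddCommGroup E] {g : ℝ → E → ℝ → E} {y : ℝ → E} {u : ℝ → ℝ → E}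

theorem tendsto_mul_const_nhdsGT_zero (C : ℝ) : Tendsto (fun ε => ε * C) (𝓝[>] 0) (𝓝 0) := by
  simpa only [zero_mul] using
    ((continuous_mul_const C).tendsto 0).mono_left nhdsWithin_le_nhds

theorem tendstoUniformlyOn_of_eventually_norm_sub_le_mul {s : Set ℝ} {C : ℝ}
    (hC : ∀ᶠ ε in 𝓝[>] 0, ∀ t ∈ s, ‖u ε t - y t‖ ≤ ε * C) :
    TendstoUniformlyOn u y (𝓝[>] 0) s := by
  refine Metric.tendstoUniformlyOn_iff.2 fun η hη => ?_
  filter_upwards [hC, (tendsto_mul_const_nhdsGT_zero C).eventually_lt_const hη] with ε hCε hεη t ht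
  rw [dist_comm, dist_eq_norm]
  exact (hCε t ht).trans_lt hεη

theorem tendstoUniformlyOn_perturbation {s : Set ℝ} {l : Filter ℝ} (hs : IsCompact s) (hl : l ≤ 𝓝 0)
    (hg : Continuous fun p : ℝ × E × ℝ => g p.1 p.2.1 p.2.2) (hy : ContinuousOn y s)
    (hu : TendstoUniformlyOn u y l s) :
    TendstoUniformlyOn (fun ε t => g t (u ε t) ε) (fun t => g t (y t) 0) l s := by
  have hcurve : IsCompact ((fun t => (t, y t, (0 : ℝ))) '' s) :=
    hs.image_of_continuousOn (by fun_prop)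
  refine Metric.tendstoUniformlyOn_iff.2 fun η hη => ?_
  obtain ⟨δ, hδ, hgδ⟩ := exists_forall_dist_lt_of_isCompact hcurve
    (fun p _ => hg.continuousAt) hη
  filter_upwards [Metric.tendstoUniformlyOn_iff.1 hu δ hδ, hl (Metric.ball_mem_nhds 0 hδ)]
    with ε huε hε t ht
  refine hgδ _ (mem_image_of_mem _ ht) (t, u ε t, ε) ?_
  simp only [Prod.dist_eq, dist_self, max_lt_iff]
  exact ⟨hδ, huε t ht, Metric.mem_ball'.1 hε⟩

variable [NormedSpace ℝ E] {a b : ℝ} {f : E → E}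

theorem exists_eventually_norm_sub_le_mul (hf : ContDiff ℝ 1 f)
    (hg : Continuous fun p : ℝ × E × ℝ => g p.1 p.2.1 p.2.2)
    (hy : IsIntegralCurveOn y (fun _ => f) (Icc a b))
    (hu : ∀ᶠ ε in 𝓝[>] 0, IsIntegralCurveOn (u ε) (fun t x => f x + ε • g t x ε) (Icc a b))
    (hua : ∀ᶠ ε in 𝓝[>] 0, u ε a = y a) :
    ∃ C, ∀ᶠ ε in 𝓝[>] 0, ∀ t ∈ Icc a b, ‖u ε t - y t‖ ≤ ε * C := by
  obtain ⟨L, hL, δ₁, hδ₁, hfL⟩ := exists_forall_norm_sub_le_of_isCompact hf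
    (isCompact_Icc.image_of_continuousOn hy.continuousOn)
  have hcurve : IsCompact ((fun t => (t, y t, (0 : ℝ))) '' Icc a b) :=
    isCompact_Icc.image_of_continuousOn
      (continuousOn_id.prodMk (hy.continuousOn.prodMk continuousOn_const))
  obtain ⟨G, hG, δ₂, hδ₂, hgG⟩ := exists_forall_norm_lt_of_isCompact hcurve
    fun p _ => hg.continuousAt
  refine ⟨gronwallBound 0 L G (b - a), ?_⟩
  filter_upwards [hu, hua, Ioo_mem_nhdsGT hδ₂, (tendsto_mul_const_nhdsGT_zero
    (gronwallBound 0 L G (b - a))).eventually_lt_const (lt_min hδ₁ hδ₂)] with ε huε huaε hε hr t ht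
  rw [← gronwallBound_zero_mul] at hr
  have hεG : 0 ≤ ε * G := (mul_pos hε.1 hG).le
  have bound : ∀ s ∈ Ico a b, ‖u ε s - y s‖ < min δ₁ δ₂ →
      ‖f (u ε s) + ε • g s (u ε s) ε - f (y s)‖ < L * ‖u ε s - y s‖ + ε * G := by
    intro s hs hus
    have hs' := Ico_subset_Icc_self hs
    have hfs := hfL _ (mem_image_of_mem y hs') _ (hus.trans_le (min_le_left _ _))
    have hgs : ‖g s (u ε s) ε‖ < G := by
      refine hgG _ (mem_image_of_mem _ hs') (s, u ε s, ε) ?_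
      simp only [Prod.dist_eq, dist_self, max_lt_iff, dist_zero_left, Real.norm_of_nonneg hε.1.le]
      exact ⟨hδ₂, by simpa only [dist_eq_norm'] using hus.trans_le (min_le_right _ _), hε.2⟩
    calc ‖f (u ε s) + ε • g s (u ε s) ε - f (y s)‖
        = ‖(f (u ε s) - f (y s)) + ε • g s (u ε s) ε‖ := by rw [add_sub_right_comm]
      _ ≤ ‖f (u ε s) - f (y s)‖ + ε * ‖g s (u ε s) ε‖ := by
        simpa only [norm_smul, Real.norm_of_nonneg hε.1.le] using
          norm_add_le (f (u ε s) - f (y s)) (ε • g s (u ε s) ε)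
      _ < L * ‖u ε s - y s‖ + ε * G := add_lt_add_of_le_of_lt hfs (by gcongr; exact hε.1)
  calc ‖u ε t - y t‖ ≤ gronwallBound 0 L (ε * G) (t - a) :=
        norm_le_gronwallBound_of_norm_deriv_lt_of_norm_lt hL.le hεG
          (fun s hs => (huε s hs).sub (hy s hs)) (by simp [huaε]) hr bound t ht
    _ ≤ gronwallBound 0 L (ε * G) (b - a) :=
        gronwallBound_mono le_rfl hεG hL.le (sub_le_sub_right ht.2 a)
    _ = ε * gronwallBound 0 L G (b - a) := gronwallBound_zero_mul L ε G (b - a)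

theorem tendstoUniformlyOn_inv_smul_remainder {F : Type*} [NormedAddCommGroup F] [NormedSpace ℝ F]
    {f : E → F} {s : Set ℝ} {C : ℝ} (hf : ContDiff ℝ 1 f) (hs : IsCompact s)
    (hy : ContinuousOn y s) (hC : ∀ᶠ ε in 𝓝[>] 0, ∀ t ∈ s, ‖u ε t - y t‖ ≤ ε * C) :
    TendstoUniformlyOn
      (fun ε t => ε⁻¹ • (f (u ε t) - f (y t) - fderiv ℝ f (y t) (u ε t - y t)))
      0 (𝓝[>] 0) s := by
  refine Metric.tendstoUniformlyOn_iff.2 fun η hη => ?_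
  have hC' : 0 < |C| + 1 := by positivity
  obtain ⟨δ, hδ, hfδ⟩ := exists_forall_norm_sub_sub_fderiv_le_of_isCompact hf
    (hs.image_of_continuousOn hy) (div_pos hη hC')
  filter_upwards [hC, Metric.tendstoUniformlyOn_iff.1
    (tendstoUniformlyOn_of_eventually_norm_sub_le_mul hC) δ hδ, self_mem_nhdsWithin]
    with ε hCε huδ hε t ht
  rw [mem_Ioi] at hε
  have hut : ‖u ε t - y t‖ < δ := by simpa only [dist_eq_norm'] using huδ t ht
  rw [Pi.zero_apply, dist_zero_left, norm_smul, norm_inv, Real.norm_of_nonneg hε.le,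
    inv_mul_lt_iff₀ hε]
  calc ‖f (u ε t) - f (y t) - fderiv ℝ f (y t) (u ε t - y t)‖
      ≤ η / (|C| + 1) * ‖u ε t - y t‖ := hfδ _ (mem_image_of_mem y ht) _ hut
    _ ≤ η / (|C| + 1) * (ε * C) := by gcongr; exact hCε t ht
    _ < η / (|C| + 1) * (ε * (|C| + 1)) := by gcongr; linarith [le_abs_self C]
    _ = ε * η := by field_simp

end Perturbation

section AdjointPairing

theorem tendsto_sub_of_tendstoUniformlyOn_deriv {ι F : Type*} [NormedAddCommGroup F]
    [NormedSpace ℝ F] [CompleteSpace F] {l : Filter ι} {a b : ℝ} {φ φ' : ι → ℝ → F} {ψ : ℝ → F}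
    (hab : a ≤ b)
    (hφ : ∀ᶠ i in l, ∀ t ∈ Icc a b, HasDerivWithinAt (φ i) (φ' i t) (Icc a b) t)
    (hψ : ContinuousOn ψ (Icc a b)) (hlim : TendstoUniformlyOn φ' ψ l (Icc a b)) :
    Tendsto (fun i => φ i b - φ i a) l (𝓝 (∫ t in a..b, ψ t)) := by
  have primitive : ∀ t ∈ Icc a b,
      HasDerivWithinAt (fun t => ∫ s in a..t, ψ s) (ψ t) (Icc a b) t := fun t ht => by
    have : Fact (t ∈ Icc a b) := ⟨ht⟩
    have hψt : IntervalIntegrable ψ MeasureTheory.volume a t :=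
      (hψ.mono (Icc_subset_Icc_right ht.2)).intervalIntegrable_of_Icc ht.1
    exact intervalIntegral.integral_hasDerivWithinAt_right hψt
      (hψ.stronglyMeasurableAtFilter_nhdsWithin measurableSet_Icc t) (hψ t ht)
  refine Metric.tendsto_nhds.2 fun η hη => ?_
  have hden : 0 < b - a + 1 := by linarith
  filter_upwards [hφ, Metric.tendstoUniformlyOn_iff.1 hlim (η / (b - a + 1)) (by positivity)]
    with i hφi hi
  have mean_value : ‖(φ i b - ∫ s in a..b, ψ s) - (φ i a - ∫ s in a..a, ψ s)‖
      ≤ η / (b - a + 1) * (b - a) :=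
    norm_image_sub_le_of_norm_deriv_le_segment' (fun t ht => (hφi t ht).sub (primitive t ht))
      (fun t ht => by
        rw [← dist_eq_norm']
        exact (hi t (Ico_subset_Icc_self ht)).le) b (right_mem_Icc.2 hab)
  rw [intervalIntegral.integral_same, sub_zero, sub_right_comm, ← dist_eq_norm] at mean_value
  calc dist (φ i b - φ i a) (∫ s in a..b, ψ s)
      ≤ η / (b - a + 1) * (b - a) := mean_value
    _ < η / (b - a + 1) * (b - a + 1) := by gcongr; linarith
    _ = η := by field_simp

variable {E : Type*} [NormedAddCommGroup E] [InnerProductSpace ℝ E]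

theorem tendstoUniformlyOn_inner_right {ι α : Type*} [TopologicalSpace α] {l : Filter ι} {s : Set α}
    {w : ι → α → E} {h z : α → E} (hs : IsCompact s) (hw : TendstoUniformlyOn w h l s)
    (hz : ContinuousOn z s) :
    TendstoUniformlyOn (fun i t => ⟪w i t, z t⟫_ℝ) (fun t => ⟪h t, z t⟫_ℝ) l s := by
  obtain ⟨Z, hZ⟩ := hs.exists_bound_of_continuousOn hz
  refine Metric.tendstoUniformlyOn_iff.2 fun η hη => ?_
  filter_upwards [Metric.tendstoUniformlyOn_iff.1 hw (η / (|Z| + 1)) (by positivity)] with i hi t ht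
  have hzt : ‖z t‖ < |Z| + 1 := by linarith [hZ t ht, le_abs_self Z]
  calc dist ⟪h t, z t⟫_ℝ ⟪w i t, z t⟫_ℝ = ‖⟪h t - w i t, z t⟫_ℝ‖ := by
        rw [dist_eq_norm, inner_sub_left]
    _ ≤ ‖h t - w i t‖ * ‖z t‖ := norm_inner_le_norm _ _
    _ ≤ dist (h t) (w i t) * (|Z| + 1) := by rw [dist_eq_norm]; gcongr
    _ < η / (|Z| + 1) * (|Z| + 1) := by gcongr; exact hi t ht
    _ = η := by field_simp

variable [CompleteSpace E]

theorem hasDerivWithinAt_inner_of_adjoint {v z : ℝ → E} {A : E →L[ℝ] E} {w : E} {s : Set ℝ} {t : ℝ}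
    (hv : HasDerivWithinAt v (A (v t) + w) s t)
    (hz : HasDerivWithinAt z (-(ContinuousLinearMap.adjoint A (z t))) s t) :
    HasDerivWithinAt (fun t => ⟪v t, z t⟫_ℝ) ⟪w, z t⟫_ℝ s t := by
  refine (hv.inner ℝ hz).congr_deriv ?_
  rw [inner_neg_right, ContinuousLinearMap.adjoint_inner_right, inner_add_left, neg_add_cancel_left]

theorem tendsto_inner_sub_inner_of_adjoint {ι : Type*} {l : Filter ι} {a b : ℝ} {A : ℝ → E →L[ℝ] E}
    {v w : ι → ℝ → E} {h z : ℝ → E} (hab : a ≤ b)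
    (hv : ∀ᶠ i in l, IsIntegralCurveOn (v i) (fun t x => A t x + w i t) (Icc a b))
    (hz : IsIntegralCurveOn z (fun t x => -(ContinuousLinearMap.adjoint (A t) x)) (Icc a b))
    (hh : ContinuousOn h (Icc a b)) (hw : TendstoUniformlyOn w h l (Icc a b)) :
    Tendsto (fun i => ⟪v i b, z b⟫_ℝ - ⟪v i a, z a⟫_ℝ) l (𝓝 (∫ t in a..b, ⟪h t, z t⟫_ℝ)) := by
  have hderiv : ∀ᶠ i in l, ∀ t ∈ Icc a b,
      HasDerivWithinAt (fun t => ⟪v i t, z t⟫_ℝ) ⟪w i t, z t⟫_ℝ (Icc a b) t := by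
    filter_upwards [hv] with i hvi t ht using hasDerivWithinAt_inner_of_adjoint (hvi t ht) (hz t ht)
  exact tendsto_sub_of_tendstoUniformlyOn_deriv hab hderiv (hh.inner hz.continuousOn)
    (tendstoUniformlyOn_inner_right isCompact_Icc hw hz.continuousOn)

end AdjointPairing

section Malkin

variable {E : Type*} [NormedAddCommGroup E] [InnerProductSpace ℝ E] [CompleteSpace E]
  {f : E → E} {g : ℝ → E → ℝ → E}

theorem tendsto_inner_inv_smul_sub {a b : ℝ} {u : ℝ → ℝ → E} {y z : ℝ → E} (hab : a ≤ b)
    (hf : ContDiff ℝ 1 f) (hg : Continuous fun p : ℝ × E × ℝ => g p.1 p.2.1 p.2.2)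
    (hu : ∀ᶠ ε in 𝓝[>] 0, IsIntegralCurveOn (u ε) (fun t x => f x + ε • g t x ε) (Icc a b))
    (hua : ∀ᶠ ε in 𝓝[>] 0, u ε a = y a) (hy : IsIntegralCurveOn y (fun _ => f) (Icc a b))
    (hz : IsIntegralCurveOn z
      (fun t x => -(ContinuousLinearMap.adjoint (fderiv ℝ f (y t)) x)) (Icc a b)) :
    Tendsto (fun ε => ⟪ε⁻¹ • (u ε b - y b), z b⟫_ℝ) (𝓝[>] 0)
      (𝓝 (∫ t in a..b, ⟪g t (y t) 0, z t⟫_ℝ)) := by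
  obtain ⟨C, hC⟩ := exists_eventually_norm_sub_le_mul hf hg hy hu hua
  have forcing_tendsto : TendstoUniformlyOn
      (fun ε t => ε⁻¹ • (f (u ε t) - f (y t) - fderiv ℝ f (y t) (u ε t - y t)) + g t (u ε t) ε)
      (fun t => g t (y t) 0) (𝓝[>] 0) (Icc a b) := by
    simpa only [zero_add, Pi.add_def] using
      (tendstoUniformlyOn_inv_smul_remainder hf isCompact_Icc hy.continuousOn hC).add
        (tendstoUniformlyOn_perturbation isCompact_Icc nhdsWithin_le_nhds hg hy.continuousOn
          (tendstoUniformlyOn_of_eventually_norm_sub_le_mul hC))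
  have quotient_isIntegralCurveOn : ∀ᶠ ε in 𝓝[>] 0,
      IsIntegralCurveOn (fun t => ε⁻¹ • (u ε t - y t))
        (fun t x => fderiv ℝ f (y t) x +
          (ε⁻¹ • (f (u ε t) - f (y t) - fderiv ℝ f (y t) (u ε t - y t)) + g t (u ε t) ε))
        (Icc a b) := by
    filter_upwards [hu, self_mem_nhdsWithin] with ε huε hε t ht
    refine (((huε t ht).sub (hy t ht)).const_smul ε⁻¹).congr_deriv ?_
    have hε' : ε⁻¹ * ε = 1 := inv_mul_cancel₀ (ne_of_gt hε)
    simp only [map_sub, map_smul, smul_sub, smul_add, smul_smul, hε', one_smul]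
    abel
  have hgy : ContinuousOn (fun t => g t (y t) 0) (Icc a b) := hg.comp_continuousOn
    (continuousOn_id.prodMk (hy.continuousOn.prodMk continuousOn_const))
  refine (tendsto_inner_sub_inner_of_adjoint hab quotient_isIntegralCurveOn hz hgy
    forcing_tendsto).congr' ?_
  filter_upwards [hua] with ε huaε
  rw [huaε, sub_self, smul_zero, inner_zero_left, sub_zero]

theorem stmt_16_general {T : ℝ} (hT : 0 ≤ T) (hf : ContDiff ℝ 1 f)
    (hg : Continuous fun p : ℝ × E × ℝ => g p.1 p.2.1 p.2.2) {X : ℝ → E → ℝ → E}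
    (hX0 : ∀ v ε, 0 ≤ ε → X 0 v ε = v)
    (hXode : ∀ v ε, 0 ≤ ε →
      IsIntegralCurveOn (fun t => X t v ε) (fun t x => f x + ε • g t x ε) (Icc 0 T))
    {x₀ z₀ : ℝ → E} (hx₀ : IsIntegralCurve x₀ fun _ => f)
    (hz₀ : IsIntegralCurve z₀ fun t x => -(ContinuousLinearMap.adjoint (fderiv ℝ f (x₀ t)) x))
    (hz₀T : Function.Periodic z₀ T) {Q₀ : E → E}
    (hQ₀ : ∀ v, Tendsto (fun ε : ℝ => ε⁻¹ • (X T v ε - X T v 0)) (𝓝[>] 0) (𝓝 (Q₀ v))) (θ : ℝ) :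
    ⟪Q₀ (x₀ θ), z₀ θ⟫_ℝ = ∫ t in (0 : ℝ)..T, ⟪g t (x₀ (t + θ)) 0, z₀ (t + θ)⟫_ℝ := by
  have hy : IsIntegralCurve (fun t => x₀ (t + θ)) fun _ => f :=
    fun t => (hx₀ (t + θ)).comp_add_const t θ
  have hz : IsIntegralCurve (fun t => z₀ (t + θ))
      fun t x => -(ContinuousLinearMap.adjoint (fderiv ℝ f (x₀ (t + θ))) x) :=
    fun t => (hz₀ (t + θ)).comp_add_const t θ
  have hXT : X T (x₀ θ) 0 = x₀ (T + θ) :=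
    eqOn_Icc_of_isIntegralCurveOn_of_contDiff hf
      (by simpa only [zero_smul, add_zero] using hXode (x₀ θ) 0 le_rfl)
      (hy.isIntegralCurveOn _) (by simp only [hX0 _ _ le_rfl, zero_add]) (right_mem_Icc.2 hT)
  have hε : ∀ᶠ ε : ℝ in 𝓝[>] 0, 0 ≤ ε :=
    eventually_mem_nhdsWithin.mono fun ε hε => (mem_Ioi.1 hε).le
  have malkin := tendsto_inner_inv_smul_sub hT hf hg
    (hε.mono fun ε => hXode (x₀ θ) ε) (hε.mono fun ε hε => by rw [hX0 _ _ hε, zero_add])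
    (hy.isIntegralCurveOn _) (hz.isIntegralCurveOn _)
  rw [← hXT, add_comm T θ, hz₀T θ] at malkin
  exact tendsto_nhds_unique ((hQ₀ (x₀ θ)).inner tendsto_const_nhds) malkin

end Malkin

/-- identity used in the proof of Theorem 3: with
`Π_θ ξ = ⟨ξ, z₀(θ)⟩ẋ₀(θ)` and `Q` as in Lemma 2, `Π_θ Q(x₀(θ),0) = M(θ)ẋ₀(θ)`;
in particular, where `ẋ₀(θ) ≠ 0`, `Π_θ Q(x₀(θ),0) = 0 ↔ M(θ) = 0`. -/
theorem stmt_16 {n : ℕ} (T : ℝ) (hT : 0 < T)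
    (f : EuclideanSpace ℝ (Fin n) → EuclideanSpace ℝ (Fin n))
    (hf : ContDiff ℝ 2 f)
    (g : ℝ → EuclideanSpace ℝ (Fin n) → ℝ → EuclideanSpace ℝ (Fin n))
    (hg : ContDiff ℝ 1 fun p : ℝ × EuclideanSpace ℝ (Fin n) × ℝ => g p.1 p.2.1 p.2.2)
    (hgT : ∀ t x e, g (t + T) x e = g t x e)
    (X : ℝ → EuclideanSpace ℝ (Fin n) → ℝ → EuclideanSpace ℝ (Fin n))
    (hX0 : ∀ v ε, X 0 v ε = v)
    (hXode : ∀ v ε t, HasDerivAt (fun s => X s v ε)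
      (f (X t v ε) + ε • g t (X t v ε) ε) t)
    (hXuniq : ∀ v ε (u : ℝ → EuclideanSpace ℝ (Fin n)), u 0 = v →
      (∀ t, HasDerivAt u (f (u t) + ε • g t (u t) ε) t) → ∀ t, u t = X t v ε)
    (x₀ : ℝ → EuclideanSpace ℝ (Fin n))
    (hx₀ : ∀ t, HasDerivAt x₀ (f (x₀ t)) t)
    (hx₀T : ∀ t, x₀ (t + T) = x₀ t)
    (z₀ : ℝ → EuclideanSpace ℝ (Fin n))
    (hz₀ : ∀ t, HasDerivAt z₀ (-(ContinuousLinearMap.adjoint (fderiv ℝ f (x₀ t)) (z₀ t))) t)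
    (hz₀T : ∀ t, z₀ (t + T) = z₀ t)
    (hnorm : ∀ t, ⟪deriv x₀ t, z₀ t⟫_ℝ = 1)
    (Q : EuclideanSpace ℝ (Fin n) → ℝ → EuclideanSpace ℝ (Fin n))
    (hQdef : ∀ v, ∀ ε ∈ Ioc (0:ℝ) 1, Q v ε = ε⁻¹ • (X T v ε - X T v 0))
    (hQlim : ∀ v, Tendsto (fun ε : ℝ => ε⁻¹ • (X T v ε - X T v 0))
      (𝓝[>] (0:ℝ)) (𝓝 (Q v 0))) :
    ∀ θ ∈ Icc (0:ℝ) T,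
      ⟪Q (x₀ θ) 0, z₀ θ⟫_ℝ • deriv x₀ θ
        = (∫ t in (0:ℝ)..T, ⟪g t (x₀ (t + θ)) 0, z₀ (t + θ)⟫_ℝ) • deriv x₀ θ ∧
      (deriv x₀ θ ≠ 0 →
        (⟪Q (x₀ θ) 0, z₀ θ⟫_ℝ • deriv x₀ θ = 0 ↔
          (∫ t in (0:ℝ)..T, ⟪g t (x₀ (t + θ)) 0, z₀ (t + θ)⟫_ℝ) = 0)) := by
  intro θ _
  rw [stmt_16_general hT.le (hf.of_le one_le_two) hg.continuous (fun v ε _ => hX0 v ε)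
    (fun v ε _ t _ => (hXode v ε t).hasDerivWithinAt) hx₀ hz₀ hz₀T hQlim θ]
  exact ⟨rfl, fun hx => smul_eq_zero_iff_left hx⟩
end
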